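/- arXiv:1204.1660 — 4 statements merged into one kernel-verified Lean document; each statement's English description precedes it below -/
import Mathlib

section
/- Let (X,d) be a metric space in which all closed bounded subsets are compact, let J : X → [0,+∞] be lower semicontinuous, and let x₀, x₁ ∈ X be fixed. Assume that (H1) the path functional 𝒥(γ) = ∫₀¹ J(γ(t)) |γ'|_X(t) dt is finite on at least one Lipschitz curve γ₀ : [0,1] → X with γ₀(0)=x₀ and γ₀(1)=x₁, and (H2) J is bounded from below by a constant α > 0. Then the minimum problem min{ 𝒥(γ) : γ Lipschitz, γ(0)=x₀, γ(1)=x₁ } admits a solution. -/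
/-!
The proof is the direct method, with the path functional replaced by a quantity that does not
involve derivatives: the partition energy
`sup ∑ (inf_{[u i, u (i+1)]} J ∘ γ) * d(γ(u i), γ(u (i+1)))`
over partitions of `[0,1]`. It is invariant under reparametrization and lower semicontinuous for
pointwise convergence of equi-Lipschitz curves (the infimum of `J` over a compact piece of the
curve is lower semicontinuous by the tube lemma).

The analytic core is that both functionals agree on Lipschitz curves. Following Ambrosio and
Kirchheim, the metric derivative is a.e. the supremum of `|d/dt d(γ(t), γ(q))|` over rational `q`
(`ae_metricDeriv_eq`). Since distances are bounded by the integral of this speed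
(`dist_le_integral_metricSpeed`), the partition energy is at most the path functional; since short
chords around a.e. point have length at least nearly speed times duration (`ae_chord_ge`), Fatou's
lemma along uniform partitions gives the converse.

A competitor of energy at most `B = 𝒥(γ₀)` has length at most `B / α`, so it can be reparametrized
to be `(1 + B / α)`-Lipschitz (`exists_reparam`). The curves with this Lipschitz constant and the
given endpoints form a compact set by Tychonoff's theorem, because closed balls of `X` are compact.
The partition energy attains its minimum there, and a minimizer solves the original problem.
-/

open MeasureTheory Set Filter
open scoped NNReal ENNReal

/-- The metric derivative `|γ'|_X(t) = lim_{s→t} d(γ(s),γ(t))/|s-t|` of a curve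
`γ : [0,1] → X`, realized as a `limsup` (which coincides with the limit whenever the
latter exists, in particular a.e. for Lipschitz curves). -/
noncomputable def metricDeriv {X : Type*} [MetricSpace X] (γ : ℝ → X) (t : ℝ) : ℝ :=
  limsup (fun s => dist (γ s) (γ t) / |s - t|) (nhdsWithin t (Set.Icc 0 1 \ {t}))

/-- The path functional `𝒥(γ) = ∫₀¹ J(γ(t)) |γ'|_X(t) dt`. -/
noncomputable def pathFunctional {X : Type*} [MetricSpace X] (J : X → ℝ≥0∞) (γ : ℝ → X) :
    ℝ≥0∞ :=
  ∫⁻ t in Set.Icc (0 : ℝ) 1, J (γ t) * ENNReal.ofReal (metricDeriv γ t)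

/-- A Lipschitz curve, parametrized on `[0,1]`. -/
def IsLipCurve {X : Type*} [MetricSpace X] (γ : ℝ → X) : Prop :=
  ∃ K : ℝ≥0, LipschitzOnWith K γ (Set.Icc 0 1)

/-- The metric speed of `γ` at `t`, as the supremum of the speeds of the real-valued functions
`r ↦ d(γ(r), γ(q))`, `q` rational. For a Lipschitz curve it agrees a.e. with the metric
derivative, but it is visibly a measurable function of `t`. -/
noncomputable def metricSpeed {X : Type*} [MetricSpace X] (γ : ℝ → X) (t : ℝ) : ℝ :=
  ⨆ q : ℚ, |deriv (fun r => dist (γ r) (γ q)) t|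

/-- The partition energy: the supremum, over partitions `u 0 ≤ ⋯ ≤ u n` of points of `[0,1]`, of
`∑ (inf_{[u i, u (i+1)]} J ∘ γ) * d(γ(u i), γ(u (i+1)))`. -/
noncomputable def partitionEnergy {X : Type*} [MetricSpace X] (J : X → ℝ≥0∞) (γ : ℝ → X) :
    ℝ≥0∞ :=
  ⨆ (n : ℕ) (u : ℕ → ℝ) (_ : Monotone u) (_ : ∀ i ≤ n, u i ∈ Icc (0 : ℝ) 1),
    ∑ i ∈ Finset.range n,
      (⨅ t ∈ Icc (u i) (u (i + 1)), J (γ t)) * edist (γ (u i)) (γ (u (i + 1)))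

/-! ### The metric speed of a Lipschitz curve -/

section Speed

variable {X : Type*} [MetricSpace X] {γ : ℝ → X} {K : ℝ≥0}

lemma lipschitz_dist_curve (hγ : LipschitzWith K γ) (x : X) :
    LipschitzWith K (fun r => dist (γ r) x) := by
  simpa [Function.comp_def] using (LipschitzWith.dist_left x).comp hγ

lemma abs_deriv_dist_le (hγ : LipschitzWith K γ) (x : X) (t : ℝ) :
    |deriv (fun r => dist (γ r) x) t| ≤ K := by
  simpa using norm_deriv_le_of_lipschitz (x₀ := t) (lipschitz_dist_curve hγ x)

lemma bddAbove_speed (hγ : LipschitzWith K γ) (t : ℝ) :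
    BddAbove (range fun q : ℚ => |deriv (fun r => dist (γ r) (γ q)) t|) :=
  ⟨K, by rintro _ ⟨q, rfl⟩; exact abs_deriv_dist_le hγ _ t⟩

lemma metricSpeed_nonneg (γ : ℝ → X) (t : ℝ) : 0 ≤ metricSpeed γ t :=
  Real.iSup_nonneg fun _ => abs_nonneg _

lemma metricSpeed_le (hγ : LipschitzWith K γ) (t : ℝ) : metricSpeed γ t ≤ K :=
  ciSup_le fun _ => abs_deriv_dist_le hγ _ t

lemma measurable_metricSpeed (γ : ℝ → X) : Measurable (metricSpeed γ) :=
  Measurable.iSup fun _ => (measurable_deriv _).abs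

lemma locallyIntegrable_metricSpeed (hγ : LipschitzWith K γ) :
    LocallyIntegrable (metricSpeed γ) volume := by
  refine (locallyIntegrable_const (K : ℝ)).mono
    (measurable_metricSpeed γ).aestronglyMeasurable (Eventually.of_forall fun t => ?_)
  simpa [abs_of_nonneg (metricSpeed_nonneg γ t)] using metricSpeed_le hγ t

lemma intervalIntegrable_metricSpeed (hγ : LipschitzWith K γ) (a b : ℝ) :
    IntervalIntegrable (metricSpeed γ) volume a b :=
  ((locallyIntegrable_metricSpeed hγ).integrableOn_isCompact isCompact_uIcc).intervalIntegrable

/-- The distance travelled is at most the integral of the speed: the bound holds for each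
`r ↦ d(γ(r), γ(q))` with `q` rational, and `q` may tend to `a`. -/
lemma dist_le_integral_metricSpeed (hγ : LipschitzWith K γ) {a b : ℝ} (hab : a ≤ b) :
    dist (γ a) (γ b) ≤ ∫ t in a..b, metricSpeed γ t := by
  have hq (q : ℚ) : dist (γ b) (γ q) - dist (γ a) (γ q) ≤ ∫ t in a..b, metricSpeed γ t := by
    have hac := ((lipschitz_dist_curve hγ (γ q)).lipschitzOnWith
      (s := uIcc a b)).absolutelyContinuousOnInterval
    rw [← hac.integral_deriv_eq_sub]
    exact intervalIntegral.integral_mono_on hab hac.intervalIntegrable_deriv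
      (intervalIntegrable_metricSpeed hγ a b)
      fun t _ => (le_abs_self _).trans (le_ciSup (bddAbove_speed hγ t) q)
  have hc : IsClosed {r : ℝ | dist (γ b) (γ r) - dist (γ a) (γ r) ≤
      ∫ t in a..b, metricSpeed γ t} := by
    have := hγ.continuous
    exact isClosed_le (by fun_prop) continuous_const
  have hall : ∀ r : ℝ, dist (γ b) (γ r) - dist (γ a) (γ r) ≤ ∫ t in a..b, metricSpeed γ t := by
    intro r
    have := hc.closure_subset_iff.2 (show range ((↑) : ℚ → ℝ) ⊆ _ by rintro _ ⟨q, rfl⟩; exact hq q)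
    exact this (Rat.denseRange_cast (𝕜 := ℝ) r)
  simpa [dist_comm] using hall a

/-- At almost every `t` the chord of `γ` over a short interval `[a, b]` containing `t` has length
at least `c * (b - a)`, for each `c` less than the speed. The point `t` need not be an endpoint,
because a real function differentiable at `t` has straddling difference quotients tending to
its derivative. -/
lemma ae_chord_ge (hγ : LipschitzWith K γ) :
    ∀ᵐ t : ℝ, ∀ c < metricSpeed γ t, ∃ δ > 0, ∀ a b, a ≤ t → t ≤ b → t - δ < a → b < t + δ →
      c * (b - a) ≤ dist (γ a) (γ b) := by
  have hd : ∀ᵐ t : ℝ, ∀ q : ℚ, DifferentiableAt ℝ (fun r => dist (γ r) (γ q)) t :=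
    ae_all_iff.2 fun q => (lipschitz_dist_curve hγ (γ q)).ae_differentiableAt_real
  filter_upwards [hd] with t ht c hc
  obtain ⟨q, hq⟩ := exists_lt_of_lt_ciSup hc
  have hD := (ht q).hasDerivAt
  set D := deriv (fun r => dist (γ r) (γ q)) t
  obtain ⟨δ, hδ, h⟩ := Metric.eventually_nhds_iff.1
    (hD.isLittleO.def (show 0 < |D| - c by linarith))
  refine ⟨δ, hδ, fun a b hat htb ha hb => ?_⟩
  have h1 := h (y := a) (by rw [Real.dist_eq, abs_lt]; constructor <;> linarith)
  have h2 := h (y := b) (by rw [Real.dist_eq, abs_lt]; constructor <;> linarith)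
  simp only [smul_eq_mul, Real.norm_eq_abs] at h1 h2
  rw [abs_of_nonpos (sub_nonpos.2 hat)] at h1
  rw [abs_of_nonneg (sub_nonneg.2 htb)] at h2
  have h3 : |dist (γ b) (γ q) - dist (γ a) (γ q)| ≤ dist (γ a) (γ b) := by
    rw [dist_comm (γ a) (γ b)]; exact abs_dist_sub_le _ _ _
  have h4 := abs_sub_abs_le_abs_sub ((b - a) * D) (dist (γ b) (γ q) - dist (γ a) (γ q))
  rw [abs_mul, abs_of_nonneg (show 0 ≤ b - a by linarith)] at h4
  have h5 : |(b - a) * D - (dist (γ b) (γ q) - dist (γ a) (γ q))| ≤ (|D| - c) * (b - a) := by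
    rw [abs_le] at h1 h2 ⊢
    constructor <;> nlinarith
  nlinarith

lemma neBot_punctured {t : ℝ} (ht : t ∈ Icc (0 : ℝ) 1) :
    (nhdsWithin t (Icc (0 : ℝ) 1 \ {t})).NeBot := by
  have h : t ∈ closure (interior (Icc (0 : ℝ) 1)) := by
    rwa [interior_Icc, closure_Ioo zero_ne_one]
  rw [← mem_closure_iff_nhdsWithin_neBot, sdiff_eq]
  refine closure_mono (inter_subset_inter_left _ interior_subset) ?_
  exact closure_minimal ((dense_compl_singleton t).open_subset_closure_inter isOpen_interior)
    isClosed_closure h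

/-- The metric derivative of a Lipschitz curve is a.e. equal to its metric speed: the difference
quotients are bounded below by `ae_chord_ge` and above by averages of the speed, which converge
by Lebesgue's differentiation theorem. -/
lemma ae_metricDeriv_eq (hγ : LipschitzWith K γ) :
    ∀ᵐ t : ℝ, t ∈ Icc (0 : ℝ) 1 → metricDeriv γ t = metricSpeed γ t := by
  filter_upwards [ae_chord_ge hγ, LocallyIntegrable.ae_hasDerivAt_integral (locallyIntegrable_metricSpeed hγ)]
    with t h1 h2 ht
  have := neBot_punctured ht
  refine Tendsto.limsup_eq ?_
  refine Tendsto.mono_left (x := nhdsWithin t {t}ᶜ) ?_ (nhdsWithin_mono _ inter_subset_right)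
  have hup : Tendsto (fun s => |slope (fun x => ∫ r in t..x, metricSpeed γ r) t s|)
      (nhdsWithin t {t}ᶜ) (nhds (metricSpeed γ t)) := by
    have := (hasDerivAt_iff_tendsto_slope.1 (h2 t)).abs
    rwa [abs_of_nonneg (metricSpeed_nonneg γ t)] at this
  have hle : ∀ s ≠ t, dist (γ s) (γ t) / |s - t| ≤
      |slope (fun x => ∫ r in t..x, metricSpeed γ r) t s| := by
    intro s hs
    simp only [slope_def_field, intervalIntegral.integral_same, sub_zero, abs_div]
    gcongr
    rcases le_total s t with h | h
    · rw [intervalIntegral.integral_symm, abs_neg]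
      exact (dist_le_integral_metricSpeed hγ h).trans (le_abs_self _)
    · rw [dist_comm]
      exact (dist_le_integral_metricSpeed hγ h).trans (le_abs_self _)
  refine tendsto_order.2 ⟨fun c hc => ?_, fun c hc => ?_⟩
  · obtain ⟨c', hcc', hc'⟩ := exists_between hc
    obtain ⟨δ, hδ, h⟩ := h1 c' hc'
    filter_upwards [self_mem_nhdsWithin, mem_nhdsWithin_of_mem_nhds (Metric.ball_mem_nhds t hδ)]
      with s hs hsδ
    rw [Metric.mem_ball, Real.dist_eq, abs_lt] at hsδ
    have hst : 0 < |s - t| := abs_pos.2 (sub_ne_zero.2 hs)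
    refine hcc'.trans_le ((le_div_iff₀ hst).2 ?_)
    rcases le_total s t with hl | hl
    · rw [abs_of_nonpos (by linarith), neg_sub]
      exact h s t hl le_rfl (by linarith) (by linarith)
    · rw [abs_of_nonneg (by linarith), dist_comm]
      exact h t s le_rfl hl (by linarith) (by linarith)
  · filter_upwards [self_mem_nhdsWithin, hup.eventually_lt_const hc] with s hs h
    exact (hle s hs).trans_lt h

/-- The path functional of a Lipschitz curve, with the speed in place of the metric
derivative. -/
lemma pathFunctional_eq (J : X → ℝ≥0∞) (hγ : LipschitzWith K γ) :
    pathFunctional J γ =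
      ∫⁻ t in Icc (0 : ℝ) 1, J (γ t) * ENNReal.ofReal (metricSpeed γ t) := by
  refine setLIntegral_congr_fun_ae measurableSet_Icc ?_
  filter_upwards [ae_metricDeriv_eq hγ] with t ht hmem
  rw [ht hmem]

/-- The metric derivative at points of `[0,1]` depends only on the values on `[0,1]`. -/
lemma pathFunctional_congr (J : X → ℝ≥0∞) {γ₁ γ₂ : ℝ → X} (h : EqOn γ₁ γ₂ (Icc 0 1)) :
    pathFunctional J γ₁ = pathFunctional J γ₂ := by
  refine setLIntegral_congr_fun measurableSet_Icc fun t ht => ?_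
  have : metricDeriv γ₁ t = metricDeriv γ₂ t := by
    refine limsup_congr ?_
    filter_upwards [self_mem_nhdsWithin] with s hs
    rw [h hs.1, h ht]
  simp only [this, h ht]

end Speed

/-! ### The path functional equals the partition energy -/

section Energy

variable {X : Type*} [MetricSpace X] {γ : ℝ → X} {K : ℝ≥0} {J : X → ℝ≥0∞}

lemma edist_le_lintegral_metricSpeed (hγ : LipschitzWith K γ) {a b : ℝ} (hab : a ≤ b) :
    edist (γ a) (γ b) ≤ ∫⁻ t in Ioc a b, ENNReal.ofReal (metricSpeed γ t) := by
  rw [edist_dist, ← ofReal_integral_eq_lintegral_ofReal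
    (intervalIntegrable_metricSpeed hγ a b).1
    (Eventually.of_forall fun t => metricSpeed_nonneg γ t),
    ← intervalIntegral.integral_of_le hab]
  exact ENNReal.ofReal_le_ofReal (dist_le_integral_metricSpeed hγ hab)

lemma partitionEnergy_le_pathFunctional (hγ : LipschitzWith K γ) :
    partitionEnergy J γ ≤ pathFunctional J γ := by
  rw [pathFunctional_eq J hγ]
  refine iSup_le fun n => iSup_le fun u => iSup_le fun hu => iSup_le fun hu01 => ?_
  calc _ ≤ ∑ i ∈ Finset.range n, ∫⁻ t in Ioc (u i) (u (i + 1)),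
        J (γ t) * ENNReal.ofReal (metricSpeed γ t) := by
        refine Finset.sum_le_sum fun i _ => ?_
        calc _ ≤ (⨅ t ∈ Icc (u i) (u (i + 1)), J (γ t)) *
              ∫⁻ t in Ioc (u i) (u (i + 1)), ENNReal.ofReal (metricSpeed γ t) := by
              gcongr
              exact edist_le_lintegral_metricSpeed hγ (hu i.le_succ)
          _ = ∫⁻ t in Ioc (u i) (u (i + 1)), (⨅ t ∈ Icc (u i) (u (i + 1)), J (γ t)) *
              ENNReal.ofReal (metricSpeed γ t) :=
              (lintegral_const_mul _ (measurable_metricSpeed γ).ennreal_ofReal).symm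
          _ ≤ _ := by
              refine setLIntegral_mono' measurableSet_Ioc fun t ht => ?_
              gcongr
              exact iInf₂_le t (Ioc_subset_Icc_self ht)
    _ = ∫⁻ t in ⋃ i ∈ Finset.range n, Ioc (u i) (u (i + 1)),
        J (γ t) * ENNReal.ofReal (metricSpeed γ t) := by
        refine (lintegral_biUnion_finset ?_ (fun _ _ => measurableSet_Ioc) _).symm
        exact hu.pairwise_disjoint_on_Ioc_succ.set_pairwise _
    _ ≤ _ := by
        refine lintegral_mono_set (iUnion₂_subset fun i hi => ?_)
        have hi := Finset.mem_range.1 hi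
        exact Ioc_subset_Icc_self.trans
          (Icc_subset_Icc (hu01 i hi.le).1 (hu01 (i + 1) hi).2)

/-- The `i`-th term of the partition energy for the uniform partition into `N = n + 1` cells
`[i/N, (i+1)/N]`, divided by the cell length `1/N`. As a step function of `t`, with
`i = ⌊t * N⌋₊`, it has the partition sum as its integral over `[0,1)`. -/
noncomputable def cellDensity (J : X → ℝ≥0∞) (γ : ℝ → X) (n i : ℕ) : ℝ≥0∞ :=
  (⨅ t ∈ Icc ((i : ℝ) / (n + 1)) ((i + 1 : ℝ) / (n + 1)), J (γ t)) *
    (ENNReal.ofReal (n + 1) * edist (γ (i / (n + 1))) (γ ((i + 1) / (n + 1))))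

lemma lintegral_cellDensity_le (J : X → ℝ≥0∞) (γ : ℝ → X) (n : ℕ) :
    ∫⁻ t in Ico (0 : ℝ) 1, cellDensity J γ n ⌊t * (n + 1)⌋₊ ≤ partitionEnergy J γ := by
  have hN : (0 : ℝ) < n + 1 := by positivity
  have hsub : Ico (0 : ℝ) 1 ⊆ ⋃ i ∈ Finset.range (n + 1),
      Ico ((i : ℝ) / (n + 1)) ((i + 1 : ℝ) / (n + 1)) := by
    intro t ht
    have h0 : 0 ≤ t * (n + 1) := mul_nonneg ht.1 hN.le
    simp only [mem_iUnion, Finset.mem_range]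
    refine ⟨⌊t * (n + 1)⌋₊, ?_, ?_, ?_⟩
    · rw [Nat.floor_lt h0]
      push_cast
      nlinarith [ht.2]
    · rw [div_le_iff₀ hN]
      exact Nat.floor_le h0
    · rw [lt_div_iff₀ hN]
      exact Nat.lt_floor_add_one _
  have hdisj : Pairwise (Function.onFun Disjoint
      fun i : ℕ => Ico ((i : ℝ) / (n + 1)) ((i + 1 : ℝ) / (n + 1))) := by
    have hm : Monotone fun i : ℕ => (i : ℝ) / (n + 1) := fun i j h => by
      dsimp only
      gcongr
    simpa using hm.pairwise_disjoint_on_Ico_succ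
  calc _ ≤ ∫⁻ t in ⋃ i ∈ Finset.range (n + 1), Ico ((i : ℝ) / (n + 1)) ((i + 1 : ℝ) / (n + 1)),
        cellDensity J γ n ⌊t * (n + 1)⌋₊ := lintegral_mono_set hsub
    _ = ∑ i ∈ Finset.range (n + 1), ∫⁻ t in Ico ((i : ℝ) / (n + 1)) ((i + 1 : ℝ) / (n + 1)),
        cellDensity J γ n ⌊t * (n + 1)⌋₊ :=
        lintegral_biUnion_finset (hdisj.set_pairwise _) (fun _ _ => measurableSet_Ico) _
    _ = ∑ i ∈ Finset.range (n + 1),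
        (⨅ t ∈ Icc ((i : ℝ) / (n + 1)) (((i + 1 : ℕ) : ℝ) / (n + 1)), J (γ t)) *
          edist (γ (i / (n + 1))) (γ (((i + 1 : ℕ) : ℝ) / (n + 1))) := by
        refine Finset.sum_congr rfl fun i _ => ?_
        have hfl : ∀ t ∈ Ico ((i : ℝ) / (n + 1)) ((i + 1 : ℝ) / (n + 1)),
            cellDensity J γ n ⌊t * (n + 1)⌋₊ = cellDensity J γ n i := by
          intro t ht
          have h1 := (div_le_iff₀ hN).1 ht.1
          rw [(Nat.floor_eq_iff ((Nat.cast_nonneg i).trans h1)).2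
            ⟨h1, (lt_div_iff₀ hN).1 ht.2⟩]
        rw [setLIntegral_congr_fun measurableSet_Ico hfl, setLIntegral_const, Real.volume_Ico,
          cellDensity, mul_assoc, mul_right_comm, ← ENNReal.ofReal_mul hN.le,
          show ((n : ℝ) + 1) * ((i + 1) / (n + 1) - i / (n + 1)) = 1 by field_simp; ring]
        simp
    _ ≤ _ := by
        unfold partitionEnergy
        refine le_iSup_of_le (n + 1) (le_iSup_of_le (fun i : ℕ => (i : ℝ) / (n + 1))
          (le_iSup_of_le (fun i j h => ?_) (le_iSup_of_le (fun i hi => ⟨?_, ?_⟩) le_rfl)))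
        · dsimp only
          gcongr
        · positivity
        · rw [div_le_one hN]
          exact_mod_cast hi

/-- By Fatou's lemma along the uniform partitions: lower semicontinuity of `J ∘ γ` handles the
infima over the cells, `ae_chord_ge` the chords. -/
lemma pathFunctional_le_partitionEnergy (hJ : LowerSemicontinuous J) (hγ : LipschitzWith K γ) :
    pathFunctional J γ ≤ partitionEnergy J γ := by
  rw [pathFunctional_eq J hγ, setLIntegral_congr Ico_ae_eq_Icc.symm]
  calc _ ≤ ∫⁻ t in Ico (0 : ℝ) 1, liminf (fun n : ℕ => cellDensity J γ n ⌊t * (n + 1)⌋₊) atTop := by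
        refine lintegral_mono_ae ?_
        filter_upwards [ae_restrict_of_ae (ae_chord_ge hγ), ae_restrict_mem measurableSet_Ico]
          with t ht hmem
        refine ENNReal.mul_le_of_forall_lt fun a ha b hb => ?_
        have hb_top : b ≠ ⊤ := hb.ne_top
        obtain ⟨δ, hδ, hchord⟩ := ht b.toReal ((ENNReal.lt_ofReal_iff_toReal_lt hb_top).1 hb)
        obtain ⟨η, hη, hinf⟩ := Metric.eventually_nhds_iff.1
          (hγ.continuous.continuousAt.eventually (hJ (γ t) a ha))
        refine le_liminf_of_le (by isBoundedDefault) ?_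
        have hlim := (tendsto_one_div_add_atTop_nhds_zero_nat (𝕜 := ℝ)).eventually_lt_const
          (lt_min hδ hη)
        filter_upwards [hlim] with n hn
        have hN : (0 : ℝ) < n + 1 := by positivity
        set i := ⌊t * (n + 1)⌋₊
        have h1 : (i : ℝ) / (n + 1) ≤ t := by
          rw [div_le_iff₀ hN]
          exact Nat.floor_le (mul_nonneg hmem.1 hN.le)
        have h2 : t < ((i : ℝ) + 1) / (n + 1) := by
          rw [lt_div_iff₀ hN]
          exact Nat.lt_floor_add_one _
        have h3 : ((i : ℝ) + 1) / (n + 1) - i / (n + 1) = 1 / (n + 1) := by ring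
        have hnδ := hn.trans_le (min_le_left _ _)
        have hnη := hn.trans_le (min_le_right _ _)
        unfold cellDensity
        gcongr
        · refine le_iInf₂ fun s hs => (hinf ?_).le
          rw [Real.dist_eq, abs_lt]
          constructor <;> linarith [hs.1, hs.2]
        · have h := hchord _ _ h1 h2.le (by linarith) (by linarith)
          rw [h3, mul_one_div, div_le_iff₀ hN, mul_comm] at h
          rw [← ENNReal.ofReal_toReal hb_top, edist_dist, ← ENNReal.ofReal_mul hN.le]
          exact ENNReal.ofReal_le_ofReal h
    _ ≤ liminf (fun n : ℕ => ∫⁻ t in Ico (0 : ℝ) 1, cellDensity J γ n ⌊t * (n + 1)⌋₊) atTop := by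
        refine lintegral_liminf_le fun n => ?_
        exact (measurable_from_nat (f := cellDensity J γ n)).comp
          (Nat.measurable_floor.comp (by fun_prop))
    _ ≤ _ := by
        refine (liminf_le_liminf (Eventually.of_forall (lintegral_cellDensity_le J γ))).trans ?_
        simp

/-- A reparametrization does not increase the partition energy: partitions are pushed forward
by `ψ`, and `ψ` maps each cell onto the cell between the image points. -/
lemma partitionEnergy_comp_le {ψ : ℝ → ℝ} (hψ : Monotone ψ) (hc : Continuous ψ)
    (h0 : ψ 0 = 0) (h1 : ψ 1 = 1) : partitionEnergy J (γ ∘ ψ) ≤ partitionEnergy J γ := by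
  unfold partitionEnergy
  refine iSup_le fun n => iSup_le fun u => iSup_le fun hu => iSup_le fun hu01 => ?_
  refine le_iSup_of_le n (le_iSup_of_le (ψ ∘ u) (le_iSup_of_le (hψ.comp hu)
    (le_iSup_of_le (fun i hi => ⟨?_, ?_⟩) ?_)))
  · rw [← h0]; exact hψ (hu01 i hi).1
  · rw [← h1]; exact hψ (hu01 i hi).2
  · refine Finset.sum_le_sum fun i _ => ?_
    refine mul_le_mul' (le_iInf₂ fun t ht => ?_) le_rfl
    obtain ⟨s, hs, rfl⟩ := intermediate_value_Icc (hu i.le_succ) hc.continuousOn ht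
    exact iInf₂_le s hs

end Energy

/-! ### Compactness and lower semicontinuity -/

section Compactness

variable {X : Type*} [MetricSpace X] {J : X → ℝ≥0∞}

/-- The curves `ℝ → X` that are `C`-Lipschitz and pass through `x₀` and `x₁` at times `0`
and `1`, as a subset of the product space `ℝ → X`, so with pointwise convergence. -/
def lipCurves (C : ℝ≥0) (x₀ x₁ : X) : Set (ℝ → X) :=
  {σ | LipschitzWith C σ ∧ σ 0 = x₀ ∧ σ 1 = x₁}

lemma isCompact_lipCurves
    (hcomp : ∀ s : Set X, IsClosed s → Bornology.IsBounded s → IsCompact s)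
    (C : ℝ≥0) (x₀ x₁ : X) : IsCompact (lipCurves C x₀ x₁) := by
  have hK : IsCompact (univ.pi fun t : ℝ => Metric.closedBall x₀ (C * dist t 0)) :=
    isCompact_univ_pi fun t => hcomp _ Metric.isClosed_closedBall Metric.isBounded_closedBall
  refine hK.of_isClosed_subset ?_ ?_
  · refine IsClosed.inter ?_ (IsClosed.inter (isClosed_eq (continuous_apply _) continuous_const)
      (isClosed_eq (continuous_apply _) continuous_const))
    have h : {σ : ℝ → X | LipschitzWith C σ} =
        ⋂ s, ⋂ t, {σ | dist (σ s) (σ t) ≤ C * dist s t} := by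
      ext σ
      simp [lipschitzWith_iff_dist_le_mul]
    change IsClosed {σ : ℝ → X | LipschitzWith C σ}
    rw [h]
    exact isClosed_iInter fun s => isClosed_iInter fun t =>
      isClosed_le ((continuous_apply s).dist (continuous_apply t)) continuous_const
  · rintro σ ⟨hσ, rfl, -⟩ t -
    exact hσ.dist_le_mul t 0

/-- On an equi-Lipschitz family the evaluation `(σ, t) ↦ σ t` is jointly continuous for
pointwise convergence. -/
lemma continuous_eval_lipCurves (C : ℝ≥0) (x₀ x₁ : X) :
    Continuous fun p : lipCurves C x₀ x₁ × ℝ => p.1.1 p.2 :=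
  continuous_prod_of_continuous_lipschitzWith' _ C
    (fun σ => σ.2.1) (fun t => (continuous_apply t).comp continuous_subtype_val)

lemma lowerSemicontinuousOn_partitionEnergy (hJ : LowerSemicontinuous J) (C : ℝ≥0) (x₀ x₁ : X) :
    LowerSemicontinuousOn (partitionEnergy J) (lipCurves C x₀ x₁) := by
  rw [← lowerSemicontinuous_restrict_iff]
  refine lowerSemicontinuous_iSup fun n => lowerSemicontinuous_iSup fun u =>
    lowerSemicontinuous_iSup fun _ => lowerSemicontinuous_iSup fun _ =>
    lowerSemicontinuous_sum fun i _ => ?_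
  intro σ y hy
  have hev := continuous_eval_lipCurves C x₀ x₁
  have happ (t : ℝ) : Continuous fun τ : lipCurves C x₀ x₁ => τ.1 t :=
    (continuous_apply t).comp continuous_subtype_val
  obtain ⟨a, ha, b, hb, hab⟩ : ∃ a < ⨅ t ∈ Icc (u i) (u (i + 1)), J (σ.1 t),
      ∃ b < edist (σ.1 (u i)) (σ.1 (u (i + 1))), y < a * b := by
    by_contra! h
    exact hy.not_ge (ENNReal.mul_le_of_forall_lt h)
  -- `J (τ t) > a` is an open condition on `(τ, t)`; compactness of the cell makes it uniform in `t`
  have hA : ∀ᶠ τ : lipCurves C x₀ x₁ in nhds σ, ∀ t ∈ Icc (u i) (u (i + 1)), a < J (τ.1 t) := by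
    refine isCompact_Icc.eventually_forall_of_forall_eventually fun t ht => ?_
    exact hev.continuousAt.eventually (hJ _ a (ha.trans_le (iInf₂_le t ht)))
  filter_upwards [hA, ((happ _).edist (happ _)).continuousAt.eventually_const_lt hb] with τ h1 h2
  exact hab.trans_le (mul_le_mul' (le_iInf₂ fun t ht => (h1 t ht).le) h2.le)

end Compactness

/-! ### Reparametrization of competitors -/

/-- A Lipschitz curve can be reparametrized so that any number that is at least one plus its
length is a Lipschitz constant. The new parameter is the normalized arc length plus time; the added time makes it a
strictly increasing function. -/
lemma exists_reparam {X : Type*} [MetricSpace X] {γ : ℝ → X} {K C : ℝ≥0} (hγ : LipschitzWith K γ)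
    (hC : 1 + ∫ t in (0 : ℝ)..1, metricSpeed γ t ≤ C) :
    ∃ ψ : ℝ → ℝ, Monotone ψ ∧ Continuous ψ ∧ ψ 0 = 0 ∧ ψ 1 = 1 ∧ LipschitzWith C (γ ∘ ψ) := by
  have hint := intervalIntegrable_metricSpeed hγ
  set φ : ℝ → ℝ := fun t => t + ∫ r in (0 : ℝ)..t, metricSpeed γ r with hφ
  have hsub (a b : ℝ) : φ b - φ a = (b - a) + ∫ r in a..b, metricSpeed γ r := by
    rw [← intervalIntegral.integral_interval_sub_left (hint 0 b) (hint 0 a)]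
    simp only [hφ]
    ring
  have hnn {a b : ℝ} (hab : a ≤ b) : 0 ≤ ∫ r in a..b, metricSpeed γ r :=
    intervalIntegral.integral_nonneg hab fun r _ => metricSpeed_nonneg γ r
  have h0 : φ 0 = 0 := by simp [hφ]
  have h1 : φ 1 ≤ C := by simpa [hφ] using hC
  have hmono : StrictMono φ := fun a b hab => by linarith [hsub a b, hnn hab.le]
  have hcont : Continuous φ :=
    continuous_id.add (intervalIntegral.continuous_primitive hint 0)
  have hsurj : Function.Surjective φ := by
    refine hcont.surjective ?_ ?_
    · refine tendsto_atTop_mono' _ ?_ tendsto_id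
      filter_upwards [eventually_ge_atTop 0] with t ht
      simp only [id]
      linarith [hsub 0 t, hnn ht]
    · refine tendsto_atBot_mono' _ ?_ tendsto_id
      filter_upwards [eventually_le_atBot 0] with t ht
      simp only [id]
      linarith [hsub t 0, hnn ht]
  have hpos : 0 < φ 1 := by rw [← h0]; exact hmono zero_lt_one
  set e := hmono.orderIsoOfSurjective φ hsurj
  have he (s : ℝ) : φ (e.symm s) = s := e.apply_symm_apply s
  have he' (s : ℝ) : e.symm (φ s) = s := e.symm_apply_apply s
  have hψ : Monotone fun s => e.symm (φ 1 * s) := fun s t hst =>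
    e.symm.monotone (mul_le_mul_of_nonneg_left hst hpos.le)
  refine ⟨fun s => e.symm (φ 1 * s), hψ, e.symm.continuous.comp (by fun_prop), ?_, ?_, ?_⟩
  · have := he' 0
    simpa [h0] using this
  · simpa using he' 1
  · have key {s t : ℝ} (hst : s ≤ t) :
        dist (γ (e.symm (φ 1 * s))) (γ (e.symm (φ 1 * t))) ≤ C * (t - s) := by
      have hle := hψ hst
      have h2 := dist_le_integral_metricSpeed hγ hle
      have h3 := hsub (e.symm (φ 1 * s)) (e.symm (φ 1 * t))
      rw [he, he] at h3
      dsimp only at hle h2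
      nlinarith
    refine LipschitzWith.of_dist_le_mul fun s t => ?_
    rcases le_total s t with h | h
    · rw [dist_comm s t, Real.dist_eq, abs_of_nonneg (sub_nonneg.2 h)]
      exact key h
    · rw [Real.dist_eq, abs_of_nonneg (sub_nonneg.2 h), dist_comm]
      exact key h

/-- A bound on the path functional bounds the length, because `J ≥ α`. -/
lemma length_le {X : Type*} [MetricSpace X] {J : X → ℝ≥0∞} {γ : ℝ → X} {K : ℝ≥0}
    (hγ : LipschitzWith K γ) {α B : ℝ≥0∞} (hα : 0 < α) (hJα : ∀ x, α ≤ J x) (hB : B ≠ ⊤)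
    (h : pathFunctional J γ ≤ B) :
    ∫ t in (0 : ℝ)..1, metricSpeed γ t ≤ (B / α).toReal := by
  have h1 : α * ∫⁻ t in Icc (0 : ℝ) 1, ENNReal.ofReal (metricSpeed γ t) ≤ B := by
    rw [← lintegral_const_mul _ (measurable_metricSpeed γ).ennreal_ofReal]
    refine le_trans (lintegral_mono fun t => ?_) ((pathFunctional_eq J hγ).symm.le.trans h)
    dsimp only
    gcongr
    exact hJα _
  have h2 : ∫⁻ t in Icc (0 : ℝ) 1, ENNReal.ofReal (metricSpeed γ t) ≤ B / α := by
    rw [ENNReal.le_div_iff_mul_le (Or.inl hα.ne') (Or.inr hB), mul_comm]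
    exact h1
  rw [intervalIntegral.integral_of_le zero_le_one,
    integral_eq_lintegral_of_nonneg_ae (Eventually.of_forall fun t => metricSpeed_nonneg γ t)
      (measurable_metricSpeed γ).aestronglyMeasurable, restrict_Ioc_eq_restrict_Icc]
  exact ENNReal.toReal_mono (ENNReal.div_ne_top hB hα.ne') h2

/-- Every competitor of energy at most `B` has a reparametrization in the compact set
`lipCurves C x₀ x₁` whose partition energy is no larger, where `C = 1 + B / α`. -/
lemma exists_mem_lipCurves {X : Type*} [MetricSpace X] {J : X → ℝ≥0∞} {γ : ℝ → X} {x₀ x₁ : X}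
    {α B : ℝ≥0∞} (hα : 0 < α) (hJα : ∀ x, α ≤ J x) (hB : B ≠ ⊤)
    (hγ : IsLipCurve γ) (h0 : γ 0 = x₀) (h1 : γ 1 = x₁) (h : pathFunctional J γ ≤ B) :
    ∃ σ ∈ lipCurves (1 + (B / α).toNNReal) x₀ x₁, partitionEnergy J σ ≤ pathFunctional J γ := by
  obtain ⟨K, hK⟩ := hγ
  -- extend `γ` from `[0,1]` to a Lipschitz curve on the line
  set γ' : ℝ → X := fun t => γ (projIcc 0 1 zero_le_one t) with hγ'
  have heq : EqOn γ' γ (Icc 0 1) := fun t ht => by simp [hγ', projIcc_of_mem zero_le_one ht]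
  have hLip : LipschitzWith K γ' := by
    have := hK.to_restrict.comp (LipschitzWith.projIcc (zero_le_one (α := ℝ)))
    rw [mul_one] at this
    exact this
  have hpf := pathFunctional_congr J heq
  rw [← hpf] at h ⊢
  obtain ⟨ψ, hmono, hcont, hψ0, hψ1, hLψ⟩ := exists_reparam (C := 1 + (B / α).toNNReal) hLip (by
    push_cast
    gcongr
    exact length_le hLip hα hJα hB h)
  refine ⟨γ' ∘ ψ, ⟨hLψ, ?_, ?_⟩,
    (partitionEnergy_comp_le hmono hcont hψ0 hψ1).trans (partitionEnergy_le_pathFunctional hLip)⟩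
  · simp [hψ0, heq (left_mem_Icc.2 zero_le_one), h0]
  · simp [hψ1, heq (right_mem_Icc.2 zero_le_one), h1]

/-- in a metric space whose closed bounded subsets are compact, if
`J : X → [0,+∞]` is lower semicontinuous, bounded below by a constant `α > 0` (H2), and the
functional `𝒥(γ) = ∫₀¹ J(γ(t)) |γ'|_X(t) dt` is finite on some Lipschitz curve joining `x₀`
to `x₁` (H1), then `min{𝒥(γ) : γ Lipschitz, γ(0) = x₀, γ(1) = x₁}` admits a solution. -/
theorem stmt_0 {X : Type*} [MetricSpace X]
    (hcomp : ∀ s : Set X, IsClosed s → Bornology.IsBounded s → IsCompact s)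
    (J : X → ℝ≥0∞) (hJ : LowerSemicontinuous J)
    (x₀ x₁ : X)
    (α : ℝ≥0∞) (hα : 0 < α) (hJα : ∀ x, α ≤ J x)
    (H1 : ∃ γ₀ : ℝ → X, IsLipCurve γ₀ ∧ γ₀ 0 = x₀ ∧ γ₀ 1 = x₁ ∧
      pathFunctional J γ₀ < ⊤) :
    ∃ γ : ℝ → X, IsLipCurve γ ∧ γ 0 = x₀ ∧ γ 1 = x₁ ∧
      ∀ γ' : ℝ → X, IsLipCurve γ' → γ' 0 = x₀ → γ' 1 = x₁ →
        pathFunctional J γ ≤ pathFunctional J γ' := by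
  obtain ⟨γ₀, hL₀, h₀0, h₀1, hfin⟩ := H1
  have hmem {γ : ℝ → X} := exists_mem_lipCurves (γ := γ) (x₀ := x₀) (x₁ := x₁) hα hJα hfin.ne
  obtain ⟨σ₀, hσ₀, -⟩ := hmem hL₀ h₀0 h₀1 le_rfl
  obtain ⟨σ, hσ, hmin⟩ := (lowerSemicontinuousOn_partitionEnergy hJ _ x₀ x₁).exists_isMinOn
    ⟨σ₀, hσ₀⟩ (isCompact_lipCurves hcomp _ x₀ x₁)
  have hle {γ : ℝ → X} (hL : IsLipCurve γ) (h0 : γ 0 = x₀) (h1 : γ 1 = x₁)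
      (h : pathFunctional J γ ≤ pathFunctional J γ₀) :
      pathFunctional J σ ≤ pathFunctional J γ := by
    obtain ⟨τ, hτ, hτγ⟩ := hmem hL h0 h1 h
    exact (pathFunctional_le_partitionEnergy hJ hσ.1).trans ((hmin hτ).trans hτγ)
  refine ⟨σ, ⟨_, hσ.1.lipschitzOnWith⟩, hσ.2.1, hσ.2.2, fun γ hL h0 h1 => ?_⟩
  rcases le_total (pathFunctional J γ) (pathFunctional J γ₀) with h | h
  · exact hle hL h0 h1 h
  · exact (hle hL₀ h₀0 h₀1 le_rfl).trans h
end

section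
/- Let (X,d) be a metric space in which all closed bounded subsets are compact, let J : X → [0,+∞] be lower semicontinuous, and let x₀, x₁ ∈ X. Assume there exists an admissible Lipschitz curve γ₀ with γ₀(0)=x₀, γ₀(1)=x₁ such that 𝒥(γ₀) < ∫₀^{+∞} ( inf_{B_r(x₀)} J ) dr, where B_r(x₀) denotes the closed ball of radius r centered at x₀. Then the minimum problem min{ 𝒥(γ) : γ Lipschitz, γ(0)=x₀, γ(1)=x₁ } admits a solution. -/
/-!
The proof is the direct method, made elementary by reparametrizing curves before passing to the
limit. A Lipschitz curve `γ` on `[0,1]` carries a monotone Lipschitz function `G` with `G 0 = 0`,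
`G' ≤ |γ'|` a.e. and `d(γ s, γ t) ≤ |G t - G s|` (`exists_arclength`). With `ℓ = G 1`, using `G / ℓ`
as the new parameter turns `γ` into an `ℓ`-Lipschitz curve `η`, and the change of variables
`r = G t` gives (`exists_reparam`)

* `ℓ ∫₀¹ J(η) ≤ 𝒥(γ)`;
* `∫₀^ℓ (inf_{B_r(x₀)} J) dr ≤ 𝒥(γ)`, because `γ t` lies in the ball of radius `G t` around `x₀`.

By the hypothesis on `γ₀` there is `R` with `𝒥(γ₀) < ∫₀^R (inf_{B_r(x₀)} J) dr`, so the second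
inequality forces `ℓ ≤ R` along a minimizing sequence. The reparametrized curves therefore satisfy
the assumptions of the Arzelà–Ascoli theorem (`exists_subseq_tendsto`). For a limit curve `η` with
limit constant `ℓ` one has `𝒥(η) ≤ ℓ ∫₀¹ J(η)`, and Fatou's lemma together with the lower
semicontinuity of `J` bounds this by the limit of the energies (`pathFunctional_le_liminf`).
-/

open MeasureTheory Set Filter
open scoped NNReal ENNReal

open scoped Topology

/-- At interior times the filter in `metricDeriv` is the punctured neighbourhood filter. -/
theorem nhdsWithin_Icc_diff {t : ℝ} (ht : t ∈ Ioo (0 : ℝ) 1) :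
    nhdsWithin t (Icc 0 1 \ {t}) = 𝓝[≠] t := by
  rw [sdiff_eq, inter_comm]
  exact nhdsWithin_inter_of_mem' (nhdsWithin_le_nhds (Icc_mem_nhds ht.1 ht.2))

theorem eventually_quotient_le {X : Type*} [MetricSpace X] {γ : ℝ → X} {K : ℝ≥0}
    (hγ : LipschitzOnWith K γ (Icc 0 1)) {t : ℝ} (ht : t ∈ Ioo (0 : ℝ) 1) :
    ∀ᶠ s in 𝓝[≠] t, dist (γ s) (γ t) / |s - t| ≤ K := by
  filter_upwards [self_mem_nhdsWithin, nhdsWithin_le_nhds (Icc_mem_nhds ht.1 ht.2)] with s hs hs'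
  have : 0 < |s - t| := abs_pos.2 (sub_ne_zero.2 hs)
  rw [div_le_iff₀ this, ← Real.dist_eq]
  exact hγ.dist_le_mul _ hs' _ (Ioo_subset_Icc_self ht)

theorem isBoundedUnder_quotient {X : Type*} [MetricSpace X] {γ : ℝ → X} {K : ℝ≥0}
    (hγ : LipschitzOnWith K γ (Icc 0 1)) {t : ℝ} (ht : t ∈ Ioo (0 : ℝ) 1) :
    (𝓝[≠] t).IsBoundedUnder (· ≤ ·) (fun s => dist (γ s) (γ t) / |s - t|) :=
  ⟨K, eventually_map.2 (eventually_quotient_le hγ ht)⟩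

theorem metricDeriv_le {X : Type*} [MetricSpace X] {γ : ℝ → X} {K : ℝ≥0}
    (hγ : LipschitzOnWith K γ (Icc 0 1)) {t : ℝ} (ht : t ∈ Ioo (0 : ℝ) 1) :
    metricDeriv γ t ≤ K := by
  unfold metricDeriv
  rw [nhdsWithin_Icc_diff ht]
  refine limsup_le_of_le ?_ (eventually_quotient_le hγ ht)
  exact IsBoundedUnder.isCoboundedUnder_le ⟨0, eventually_map.2 (Eventually.of_forall fun s => by
    positivity)⟩

/-- A real function varying at most as much as `γ`, such as the distance from `γ` to a fixed point,
has derivative bounded by the metric derivative of `γ`. -/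
theorem abs_deriv_le_metricDeriv {X : Type*} [MetricSpace X] {γ : ℝ → X} {K : ℝ≥0}
    (hγ : LipschitzOnWith K γ (Icc 0 1)) {φ : ℝ → ℝ} {t : ℝ} (ht : t ∈ Ioo (0 : ℝ) 1)
    (hφ : ∀ s ∈ Icc (0 : ℝ) 1, |φ s - φ t| ≤ dist (γ s) (γ t))
    (hd : DifferentiableAt ℝ φ t) :
    |deriv φ t| ≤ metricDeriv γ t := by
  have h1 : Tendsto (fun s => |slope φ t s|) (𝓝[≠] t) (𝓝 |deriv φ t|) :=
    (hasDerivAt_iff_tendsto_slope.1 hd.hasDerivAt).abs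
  unfold metricDeriv
  rw [nhdsWithin_Icc_diff ht, ← h1.limsup_eq]
  refine limsup_le_limsup ?_ h1.isCoboundedUnder_le (isBoundedUnder_quotient hγ ht)
  filter_upwards [nhdsWithin_le_nhds (Icc_mem_nhds ht.1 ht.2)] with s hs
  rw [slope_def_field, abs_div]
  gcongr
  exact hφ s hs

/-- Existence of an arclength-type parameter. The density is `g = sup_q |φ_q'|`, where
`φ_q(t) = d(γ(t), γ(q))` and `q` runs through the rationals, and `G(t) = ∫₀ᵗ g`. The density is
measurable and lies a.e. below the metric derivative, whose own measurability and a.e. existence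
as a limit are therefore never needed; it still controls distances by the fundamental theorem of
calculus for the Lipschitz functions `φ_q`. -/
theorem exists_arclength {X : Type*} [MetricSpace X] {γ : ℝ → X} {K : ℝ≥0}
    (hγ : LipschitzOnWith K γ (Icc 0 1)) :
    ∃ g G : ℝ → ℝ, LipschitzWith K G ∧ Monotone G ∧ G 0 = 0 ∧ (∀ᵐ t, HasDerivAt G (g t) t) ∧
      (∀ᵐ t, t ∈ Ioo (0 : ℝ) 1 → g t ≤ metricDeriv γ t) ∧
      ∀ s ∈ Icc (0 : ℝ) 1, ∀ t ∈ Icc (0 : ℝ) 1, dist (γ s) (γ t) ≤ |G t - G s| := by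
  -- Extending `γ` by constants outside `[0,1]` makes every `φ q` globally Lipschitz.
  set γe : ℝ → X := IccExtend zero_le_one ((Icc (0 : ℝ) 1).domRestrict γ) with hγe
  have hLip : LipschitzWith K γe := by
    have h := (lipschitzOnWith_iff_restrict.1 hγ).comp
      (LipschitzWith.projIcc (zero_le_one (α := ℝ)))
    rwa [mul_one] at h
  have hext : ∀ s ∈ Icc (0 : ℝ) 1, γe s = γ s := fun s hs => by
    rw [hγe, IccExtend_of_mem _ _ hs]; rfl
  let φ : ℚ → ℝ → ℝ := fun q t => dist (γe t) (γe q)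
  have hφ : ∀ q, LipschitzWith K (φ q) := fun q => by
    have := (LipschitzWith.dist_left (γe q)).comp hLip
    rwa [one_mul] at this
  have hφK : ∀ q t, |deriv (φ q) t| ≤ K := fun q t => norm_deriv_le_of_lipschitz (hφ q)
  let g : ℝ → ℝ := fun t => ⨆ q, |deriv (φ q) t|
  have hbdd : ∀ t, BddAbove (range fun q => |deriv (φ q) t|) := fun t =>
    ⟨K, by rintro _ ⟨q, rfl⟩; exact hφK q t⟩
  have hg0 : ∀ t, 0 ≤ g t := fun t => Real.iSup_nonneg fun q => abs_nonneg _
  have hgK : ∀ t, g t ≤ K := fun t => ciSup_le fun q => hφK q t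
  have hgm : Measurable g := Measurable.iSup fun q => (measurable_deriv (φ q)).abs
  have hgloc : LocallyIntegrable g volume :=
    (locallyIntegrable_const (K : ℝ)).mono hgm.aestronglyMeasurable
      (Eventually.of_forall fun t => by simpa [abs_of_nonneg (hg0 t)] using hgK t)
  have hgi : ∀ a b, IntervalIntegrable g volume a b := fun a b =>
    (hgloc.integrableOn_isCompact isCompact_uIcc).intervalIntegrable
  let G : ℝ → ℝ := fun t => ∫ u in (0 : ℝ)..t, g u
  have hGsub : ∀ s t, G t - G s = ∫ u in s..t, g u := fun s t =>
    intervalIntegral.integral_interval_sub_left (hgi _ _) (hgi _ _)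
  have hmono : Monotone G := fun s t hst => by
    rw [← sub_nonneg, hGsub]
    exact intervalIntegral.integral_nonneg hst fun u _ => hg0 u
  have key : ∀ s t, s ≤ t → dist (γe s) (γe t) ≤ G t - G s := by
    intro s t hst
    -- The bound holds for rational `q`, hence by density for all `q`; it is used at `q = s`.
    have hq : ∀ q : ℝ, |dist (γe t) (γe q) - dist (γe s) (γe q)| ≤ G t - G s := by
      have hcl : IsClosed {q : ℝ | |dist (γe t) (γe q) - dist (γe s) (γe q)| ≤ G t - G s} := by
        have := hLip.continuous
        exact isClosed_le (by fun_prop) (by fun_prop)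
      refine fun q => (Rat.denseRange_cast (𝕜 := ℝ)).induction_on q hcl fun q => ?_
      have h1 := ((hφ q).lipschitzOnWith (s := uIcc s t)).absolutelyContinuousOnInterval
      have h2 := h1.integral_deriv_eq_sub
      change |φ q t - φ q s| ≤ _
      rw [← h2, hGsub]
      refine (intervalIntegral.abs_integral_le_integral_abs hst).trans ?_
      exact intervalIntegral.integral_mono_on hst h1.intervalIntegrable_deriv.abs (hgi _ _)
        fun u _ => le_ciSup (hbdd u) q
    simpa [dist_comm, abs_of_nonneg] using hq s
  refine ⟨g, G, ?_, hmono, by simp [G], ?_, ?_, ?_⟩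
  · refine LipschitzWith.of_dist_le_mul fun t s => ?_
    rw [Real.dist_eq, hGsub, Real.dist_eq, ← Real.norm_eq_abs]
    exact intervalIntegral.norm_integral_le_of_norm_le_const fun u _ => by
      simpa [abs_of_nonneg (hg0 u)] using hgK u
  · filter_upwards [LocallyIntegrable.ae_hasDerivAt_integral hgloc] with t ht using ht 0
  · have : ∀ᵐ t, ∀ q, DifferentiableAt ℝ (φ q) t :=
      ae_all_iff.2 fun q => (hφ q).ae_differentiableAt_real
    filter_upwards [this] with t ht ht'
    refine ciSup_le fun q => abs_deriv_le_metricDeriv hγ ht' (fun s hs => ?_) (ht q)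
    rw [← hext s hs, ← hext t (Ioo_subset_Icc_self ht')]
    exact abs_dist_sub_le _ _ _
  · intro s hs t ht
    rw [← hext s hs, ← hext t ht]
    rcases le_total s t with h | h
    · exact (key s t h).trans (le_abs_self _)
    · rw [dist_comm, abs_sub_comm]
      exact (key t s h).trans (le_abs_self _)

/-- One half of the change of variables `r = G(t)` for a monotone Lipschitz function. The exceptional
set where `G` has no derivative is negligible because its image under the Lipschitz map `G` is
null; no measurability of `h` is required. -/
theorem lintegral_Icc_le_of_monotone {G g : ℝ → ℝ} {K : ℝ≥0} (hG : LipschitzWith K G)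
    (hmono : Monotone G) (hd : ∀ᵐ t, HasDerivAt G (g t) t) (h : ℝ → ℝ≥0∞) :
    ∫⁻ r in Icc (G 0) (G 1), h r ≤ ∫⁻ t in Icc (0 : ℝ) 1, ENNReal.ofReal (g t) * h (G t) := by
  obtain ⟨s, hs, hsm, hsd⟩ := hd.exists_measurable_mem
  have hnull : volume (G '' sᶜ) = 0 := by
    have h1 := hG.hausdorffMeasure_image_le (d := 1) zero_le_one sᶜ
    rw [hausdorffMeasure_real, show volume sᶜ = 0 from hs, mul_zero] at h1
    exact le_antisymm h1 zero_le
  have hcov : Icc (G 0) (G 1) ⊆ G '' (s ∩ Icc 0 1) ∪ G '' sᶜ := by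
    intro r hr
    obtain ⟨t, ht, rfl⟩ := intermediate_value_Icc zero_le_one hG.continuous.continuousOn hr
    by_cases hts : t ∈ s
    · exact Or.inl ⟨t, ⟨hts, ht⟩, rfl⟩
    · exact Or.inr ⟨t, hts, rfl⟩
  calc ∫⁻ r in Icc (G 0) (G 1), h r
      ≤ ∫⁻ r in G '' (s ∩ Icc 0 1) ∪ G '' sᶜ, h r := lintegral_mono_set hcov
    _ ≤ (∫⁻ r in G '' (s ∩ Icc 0 1), h r) + ∫⁻ r in G '' sᶜ, h r := lintegral_union_le _ _ _
    _ = ∫⁻ r in G '' (s ∩ Icc 0 1), h r := by rw [setLIntegral_measure_zero _ _ hnull, add_zero]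
    _ = ∫⁻ t in s ∩ Icc 0 1, ENNReal.ofReal (g t) * h (G t) :=
      lintegral_image_eq_lintegral_deriv_mul_of_monotoneOn (hsm.inter measurableSet_Icc)
        (fun t ht => (hsd t ht.1).hasDerivWithinAt) (hmono.monotoneOn _) h
    _ ≤ _ := lintegral_mono_set inter_subset_right

/-- Every Lipschitz curve `γ` can be reparametrized as an `ℓ`-Lipschitz curve `η` on `[0,1]` for which
the energy with constant speed `ℓ` does not exceed `𝒥(γ)`. Here `ℓ = G(1)` for the parameter `G` of
`exists_arclength`. The last inequality bounds `ℓ`: since `γ(t)` lies in the ball of radius `G(t)`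
around `γ(0)`, the value `J(γ(t))` is at least the infimum of `J` over that ball. -/
theorem exists_reparam_s2 {X : Type*} [MetricSpace X] (J : X → ℝ≥0∞) {γ : ℝ → X} {K : ℝ≥0}
    (hγ : LipschitzOnWith K γ (Icc 0 1)) :
    ∃ (ℓ : ℝ≥0) (η : ℝ → X), LipschitzWith ℓ η ∧ η 0 = γ 0 ∧ η 1 = γ 1 ∧
      ℓ * ∫⁻ t in Icc (0 : ℝ) 1, J (η t) ≤ pathFunctional J γ ∧
      ∫⁻ r in Ioc (0 : ℝ) ℓ, ⨅ x ∈ Metric.closedBall (γ 0) r, J x ≤ pathFunctional J γ := by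
  obtain ⟨g, G, hG, hmono, hG0, hGd, hgm, hdist⟩ := exists_arclength hγ
  have hG1 : 0 ≤ G 1 := hG0 ▸ hmono zero_le_one
  -- Both integral bounds are instances of this change of variables, for two choices of `h`.
  have hle : ∀ h : ℝ → ℝ≥0∞, (∀ t ∈ Icc (0 : ℝ) 1, h (G t) ≤ J (γ t)) →
      ∫⁻ r in Icc 0 (G 1), h r ≤ pathFunctional J γ := by
    intro h hh
    have h1 := lintegral_Icc_le_of_monotone hG hmono hGd h
    rw [hG0] at h1
    refine h1.trans ?_
    unfold pathFunctional
    rw [← restrict_Ioo_eq_restrict_Icc]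
    refine lintegral_mono_ae ((ae_restrict_iff' measurableSet_Ioo).2 ?_)
    filter_upwards [hgm] with t ht ht'
    rw [mul_comm]
    gcongr
    · exact hh t (Ioo_subset_Icc_self ht')
    · exact ht ht'
  have hτ : ∀ u : Icc (0 : ℝ) 1, ∃ t ∈ Icc (0 : ℝ) 1, G t = G 1 * u := by
    intro u
    have : G 1 * u ∈ Icc (G 0) (G 1) := by
      rw [hG0]
      exact ⟨mul_nonneg hG1 u.2.1, mul_le_of_le_one_right hG1 u.2.2⟩
    exact intermediate_value_Icc zero_le_one hG.continuous.continuousOn this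
  choose τ hτ1 hτ2 using hτ
  -- `τ u` is an arbitrary preimage of `ℓ u` under `G`, which need not be injective; `γ` takes the
  -- same value at all of them.
  let η : ℝ → X := fun u => γ (τ (projIcc 0 1 zero_le_one u))
  have hηγ : ∀ u ∈ Icc (0 : ℝ) 1, ∀ t ∈ Icc (0 : ℝ) 1, G t = G 1 * u → η u = γ t := by
    intro u hu t ht h
    refine dist_le_zero.1 ((hdist _ (hτ1 _) _ ht).trans_eq ?_)
    rw [hτ2, projIcc_of_mem _ hu, h, sub_self, abs_zero]
  have hcoe : ((G 1).toNNReal : ℝ) = G 1 := Real.coe_toNNReal _ hG1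
  refine ⟨(G 1).toNNReal, η, ?_, ?_, ?_, ?_, ?_⟩
  · refine LipschitzWith.of_dist_le_mul fun u v => ?_
    rw [hcoe]
    refine (hdist _ (hτ1 _) _ (hτ1 _)).trans ?_
    rw [hτ2, hτ2, ← mul_sub, abs_mul, abs_of_nonneg hG1, abs_sub_comm]
    have := (LipschitzWith.projIcc (zero_le_one (α := ℝ))).dist_le_mul u v
    rw [NNReal.coe_one, one_mul] at this
    exact mul_le_mul_of_nonneg_left this hG1
  · exact hηγ 0 (by simp) 0 (by simp) (by simp [hG0])
  · exact hηγ 1 (by simp) 1 (by simp) (by simp)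
  · rcases hG1.eq_or_lt with h0 | h0
    · simp [← h0]
    have himg := lintegral_image_eq_lintegral_deriv_mul_of_monotoneOn (s := Icc (0 : ℝ) 1)
      (f := fun u => G 1 * u) (f' := fun _ => G 1) measurableSet_Icc
      (fun x _ => by simpa using ((hasDerivAt_id x).const_mul (G 1)).hasDerivWithinAt)
      (fun u _ v _ huv => by dsimp only; gcongr) (fun r => J (η (r / G 1)))
    simp only [mul_div_cancel_left₀ _ h0.ne'] at himg
    refine (lintegral_const_mul_le _ _).trans (himg.symm.le.trans ?_)
    refine (lintegral_mono_set ?_).trans (hle (fun r => J (η (r / G 1))) fun t ht => ?_)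
    · rintro _ ⟨u, hu, rfl⟩
      exact ⟨mul_nonneg hG1 hu.1, mul_le_of_le_one_right hG1 hu.2⟩
    · have h2 : 0 ≤ G t := hG0 ▸ hmono ht.1
      have h3 : G t ≤ G 1 := hmono ht.2
      rw [hηγ _ ⟨by positivity, (div_le_one h0).2 h3⟩ t ht (by field_simp)]
  · rw [hcoe]
    refine (lintegral_mono_set Ioc_subset_Icc_self).trans (hle _ fun t ht => ?_)
    refine iInf₂_le (γ t) ?_
    rw [Metric.mem_closedBall, dist_comm]
    refine (hdist 0 (by simp) t ht).trans_eq ?_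
    rw [hG0, sub_zero, abs_of_nonneg (hG0 ▸ hmono ht.1)]

/-- Lower semicontinuity along curves `ηs n` run with speed bounds `ℓs n → ℓ`: the energies on the
right have constant speed, so Fatou's lemma suffices. -/
theorem pathFunctional_le_liminf {X : Type*} [MetricSpace X] {J : X → ℝ≥0∞}
    (hJ : LowerSemicontinuous J) {η : ℝ → X} {ℓ : ℝ≥0} (hη : LipschitzWith ℓ η)
    {ηs : ℕ → ℝ → X} {ℓs : ℕ → ℝ≥0} (hcont : ∀ n, Continuous (ηs n))
    (hℓ : Tendsto ℓs atTop (𝓝 ℓ))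
    (hlim : ∀ t ∈ Icc (0 : ℝ) 1, Tendsto (fun n => ηs n t) atTop (𝓝 (η t))) :
    pathFunctional J η ≤ liminf (fun n => ℓs n * ∫⁻ t in Icc (0 : ℝ) 1, J (ηs n t)) atTop := by
  have hmeas : ∀ n, Measurable fun t => J (ηs n t) := fun n =>
    (LowerSemicontinuous.comp hJ (hcont n)).measurable
  calc pathFunctional J η
      ≤ ∫⁻ t in Icc (0 : ℝ) 1, J (η t) * ℓ := by
        unfold pathFunctional
        rw [← restrict_Ioo_eq_restrict_Icc]
        refine setLIntegral_mono' measurableSet_Ioo fun t ht => ?_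
        gcongr
        rw [← ENNReal.ofReal_coe_nnreal]
        exact ENNReal.ofReal_le_ofReal (metricDeriv_le hη.lipschitzOnWith ht)
    _ ≤ ∫⁻ t in Icc (0 : ℝ) 1, liminf (fun n => ℓs n * J (ηs n t)) atTop := by
        refine setLIntegral_mono' measurableSet_Icc fun t ht => ?_
        refine ENNReal.mul_le_of_forall_lt fun b hb c hc => ?_
        refine le_liminf_of_le (by isBoundedDefault) ?_
        filter_upwards [(hlim t ht).eventually (hJ (η t) b hb),
          (ENNReal.tendsto_coe.2 hℓ).eventually (lt_mem_nhds hc)] with n h1 h2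
        rw [mul_comm]
        gcongr
    _ ≤ liminf (fun n => ∫⁻ t in Icc (0 : ℝ) 1, ℓs n * J (ηs n t)) atTop :=
        lintegral_liminf_le fun n => (hmeas n).const_mul _
    _ = _ := by simp_rw [lintegral_const_mul _ (hmeas _)]

/-- Arzelà–Ascoli for curves from `x₀` with Lipschitz constants `ℓs n ≤ R`, with convergence of the
constants along the same subsequence. -/
theorem exists_subseq_tendsto {X : Type*} [MetricSpace X] [ProperSpace X] {x₀ : X} {R : ℝ≥0}
    {ηs : ℕ → ℝ → X} {ℓs : ℕ → ℝ≥0} (hη : ∀ n, LipschitzWith (ℓs n) (ηs n))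
    (hℓ : ∀ n, ℓs n ≤ R) (h0 : ∀ n, ηs n 0 = x₀) :
    ∃ (φ : ℕ → ℕ) (ℓ : ℝ≥0) (η : ℝ → X), StrictMono φ ∧ Tendsto (ℓs ∘ φ) atTop (𝓝 ℓ) ∧
      LipschitzWith ℓ η ∧
      ∀ t ∈ Icc (0 : ℝ) 1, Tendsto (fun n => ηs (φ n) t) atTop (𝓝 (η t)) := by
  let A : Set (BoundedContinuousFunction (Icc (0 : ℝ) 1) X) :=
    {f | (∀ x y, dist (f x) (f y) ≤ R * dist x y) ∧ f 0 = x₀}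
  have hA : IsCompact A := by
    refine BoundedContinuousFunction.arzela_ascoli₂ (Metric.closedBall x₀ R)
      (isCompact_closedBall _ _) A ?_ ?_ ?_
    · have hev := fun x : Icc (0 : ℝ) 1 =>
        continuous_eval_const (F := BoundedContinuousFunction (Icc (0 : ℝ) 1) X) x
      refine IsClosed.and ?_ (isClosed_eq (hev 0) continuous_const)
      simp only [ofPred_forall]
      exact isClosed_iInter fun x => isClosed_iInter fun y =>
        isClosed_le ((hev x).dist (hev y)) continuous_const
    · rintro f x ⟨hf, hf0⟩
      rw [Metric.mem_closedBall, ← hf0]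
      refine (hf x 0).trans (mul_le_of_le_one_right R.2 ?_)
      rw [Subtype.dist_eq, Real.dist_eq]
      simpa [abs_of_nonneg x.2.1] using x.2.2
    · exact (LipschitzWith.uniformEquicontinuous _ R fun f =>
        LipschitzWith.of_dist_le_mul f.2.1).equicontinuous
  let F : ℕ → BoundedContinuousFunction (Icc (0 : ℝ) 1) X := fun n =>
    BoundedContinuousFunction.mkOfCompact ⟨fun t => ηs n t,
      (hη n).continuous.comp continuous_subtype_val⟩
  have hF : ∀ n, (F n, ℓs n) ∈ A ×ˢ Icc 0 R := fun n =>
    ⟨⟨fun x y => ((hη n).weaken (hℓ n)).dist_le_mul x y, h0 n⟩, zero_le, hℓ n⟩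
  obtain ⟨⟨f, ℓ⟩, -, φ, hφ, hlim⟩ := (hA.prod isCompact_Icc).tendsto_subseq hF
  obtain ⟨hlimf, hlimℓ⟩ := (Prod.tendsto_iff _ _).1 hlim
  have hpt : ∀ x : Icc (0 : ℝ) 1, Tendsto (fun n => ηs (φ n) x) atTop (𝓝 (f x)) := fun x =>
    ((continuous_eval_const x).tendsto f).comp hlimf
  have hf : LipschitzWith ℓ f := by
    refine LipschitzWith.of_dist_le_mul fun x y => ?_
    refine le_of_tendsto_of_tendsto' ((hpt x).dist (hpt y))
      ((NNReal.tendsto_coe.2 hlimℓ).mul_const (dist x y)) fun n => ?_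
    exact (hη (φ n)).dist_le_mul x y
  refine ⟨φ, ℓ, IccExtend zero_le_one f, hφ, hlimℓ, ?_, fun t ht => ?_⟩
  · have h := hf.comp (LipschitzWith.projIcc (zero_le_one (α := ℝ)))
    rwa [mul_one] at h
  · rw [IccExtend_of_mem _ _ ht]
    exact hpt ⟨t, ht⟩

/-- in a metric space whose closed bounded subsets are compact, if
`J : X → [0,+∞]` is lower semicontinuous and there is an admissible Lipschitz curve `γ₀`
joining `x₀` to `x₁` with `𝒥(γ₀) < ∫₀^∞ (inf_{B_r(x₀)} J) dr`, then the problem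
`min{𝒥(γ) : γ Lipschitz, γ(0) = x₀, γ(1) = x₁}` admits a solution. -/
theorem stmt_2 {X : Type*} [MetricSpace X]
    (hcomp : ∀ s : Set X, IsClosed s → Bornology.IsBounded s → IsCompact s)
    (J : X → ℝ≥0∞) (hJ : LowerSemicontinuous J)
    (x₀ x₁ : X)
    (H : ∃ γ₀ : ℝ → X, IsLipCurve γ₀ ∧ γ₀ 0 = x₀ ∧ γ₀ 1 = x₁ ∧
      pathFunctional J γ₀ <
        ∫⁻ r in Set.Ioi (0 : ℝ), ⨅ x ∈ Metric.closedBall x₀ r, J x) :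
    ∃ γ : ℝ → X, IsLipCurve γ ∧ γ 0 = x₀ ∧ γ 1 = x₁ ∧
      ∀ γ' : ℝ → X, IsLipCurve γ' → γ' 0 = x₀ → γ' 1 = x₁ →
        pathFunctional J γ ≤ pathFunctional J γ' := by
  have : ProperSpace X :=
    ⟨fun x r => hcomp _ Metric.isClosed_closedBall Metric.isBounded_closedBall⟩
  obtain ⟨γ₀, hγ₀, h00, h01, hlt⟩ := H
  -- `R` bounds the length `ℓ` of every reparametrized competitor of energy close to the infimum.
  obtain ⟨R, hR⟩ : ∃ R : ℕ, pathFunctional J γ₀ <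
      ∫⁻ r in Ioc (0 : ℝ) R, ⨅ x ∈ Metric.closedBall x₀ r, J x := by
    have hU : Ioi (0 : ℝ) = ⋃ n : ℕ, Ioc (0 : ℝ) n := by
      rw [iUnion_Ioc_eq_Ioi_self_iff.2 fun x _ => exists_nat_ge x]
    have hdir : Directed (· ⊆ ·) fun n : ℕ => Ioc (0 : ℝ) n :=
      Monotone.directed_le fun a b hab => Ioc_subset_Ioc_right (Nat.cast_le.2 hab)
    rw [hU, setLIntegral_iUnion_of_directed _ hdir] at hlt
    exact lt_iSup_iff.1 hlt
  let S : Set ℝ≥0∞ :=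
    {c | ∃ γ : ℝ → X, IsLipCurve γ ∧ γ 0 = x₀ ∧ γ 1 = x₁ ∧ pathFunctional J γ = c}
  have hS₀ : pathFunctional J γ₀ ∈ S := ⟨γ₀, hγ₀, h00, h01, rfl⟩
  obtain ⟨u, -, hu, huS⟩ := exists_seq_tendsto_sInf ⟨_, hS₀⟩ (OrderBot.bddBelow S)
  obtain ⟨N, hN⟩ := eventually_atTop.1
    (hu.eventually_lt_const ((sInf_le hS₀).trans_lt hR))
  -- Shifting by `N` puts the whole minimizing sequence below the threshold that forces `ℓ ≤ R`.
  have hcurve : ∀ n, ∃ (ℓ : ℝ≥0) (η : ℝ → X), LipschitzWith ℓ η ∧ η 0 = x₀ ∧ η 1 = x₁ ∧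
      ℓ * ∫⁻ t in Icc (0 : ℝ) 1, J (η t) ≤ u (n + N) ∧ ℓ ≤ (R : ℝ≥0) := by
    intro n
    obtain ⟨γ, ⟨K, hK⟩, h0, h1, hγu⟩ := huS (n + N)
    obtain ⟨ℓ, η, hη, hη0, hη1, hle, hlen⟩ := exists_reparam_s2 J hK
    rw [hγu, h0] at hlen
    refine ⟨ℓ, η, hη, hη0.trans h0, hη1.trans h1, hγu ▸ hle, ?_⟩
    by_contra! hℓR
    refine (hlen.trans_lt (hN (n + N) (Nat.le_add_left _ _))).not_ge (lintegral_mono_set ?_)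
    exact Ioc_subset_Ioc_right (by exact_mod_cast hℓR.le)
  choose ℓs ηs hLip hη0 hη1 hle hℓR using hcurve
  obtain ⟨φ, ℓ, η, hφ, hℓ, hη, hlim⟩ := exists_subseq_tendsto hLip hℓR hη0
  refine ⟨η, ⟨ℓ, hη.lipschitzOnWith⟩, ?_, ?_, fun γ' hγ' h0' h1' => ?_⟩
  · exact tendsto_nhds_unique (hlim 0 (by simp)) (by simp [hη0])
  · exact tendsto_nhds_unique (hlim 1 (by simp)) (by simp [hη1])
  calc pathFunctional J η
      ≤ liminf (fun n => ℓs (φ n) * ∫⁻ t in Icc (0 : ℝ) 1, J (ηs (φ n) t)) atTop :=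
        pathFunctional_le_liminf hJ hη (fun n => (hLip (φ n)).continuous) hℓ hlim
    _ ≤ liminf (fun n => u (φ n + N)) atTop :=
        liminf_le_liminf (Eventually.of_forall fun n => hle (φ n))
    _ = sInf S :=
        (hu.comp ((tendsto_add_atTop_nat N).comp hφ.tendsto_atTop)).liminf_eq
    _ ≤ pathFunctional J γ' := sInf_le ⟨γ', hγ', h0', h1', rfl⟩
end

section
/- For every Lipschitz curve γ : [0,1] → X in a metric space (X,d), the metric derivative |γ'|_X(t) = lim_{s→t} d(γ(s),γ(t))/|s-t| exists for almost every t ∈ [0,1], the function t ↦ |γ'|_X(t) is integrable, and for all s,t ∈ [0,1] with s ≤ t one has d(γ(t),γ(s)) ≤ ∫ₛᵗ |γ'|_X(τ) dτ. -/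
/-!
Extend the curve to a `K`-Lipschitz curve `g : ℝ → X`, constant outside `[0,1]`. For `q ∈ ℚ` the
function `φ_q s = d(g s, g q)` is real-valued and `K`-Lipschitz, hence differentiable almost
everywhere and the integral of its derivative. The metric derivative is `m = sup_q |φ_q'|`, which is
measurable and bounded by `K`.

* For `s ≤ t`, `φ_q t - φ_q s = ∫ₛᵗ φ_q' ≤ ∫ₛᵗ m`. By density of `ℚ`, the point `g q` may be replaced
  by `g s`, which gives `d(g s, g t) ≤ ∫ₛᵗ m`.
* Since `|φ_q s - φ_q t| ≤ d(g s, g t)`, the lower limit of `d(g s, g t) / |s - t|` as `s → t` is at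
  least `|φ_q' t|` for every `q`, so at least `m t`, wherever all `φ_q` are differentiable. By the
  integral bound, the upper limit is at most `m t` at every `t` where the primitive of `m` has
  derivative `m t`, which is almost every `t` by Lebesgue's differentiation theorem.
-/

open MeasureTheory Set Filter
open scoped NNReal ENNReal

namespace MetricDerivative

variable {X : Type*} [MetricSpace X]

/-- The distance from the moving point `g s` to the point `g r` of the curve. -/
noncomputable def distTo (g : ℝ → X) (r s : ℝ) : ℝ := dist (g s) (g r)

/-- The candidate for the metric derivative of `g`: the supremum over rational `q` of
`|d/ds d(g s, g q)|`. For a Lipschitz curve the family is bounded, so the real supremum is not a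
junk value. -/
noncomputable def speed (g : ℝ → X) (t : ℝ) : ℝ := ⨆ q : ℚ, |deriv (distTo g q) t|

variable {g : ℝ → X} {K : ℝ≥0}

lemma lipschitz_distTo (hg : LipschitzWith K g) (r : ℝ) : LipschitzWith K (distTo g r) :=
  LipschitzWith.of_dist_le_mul fun x y =>
    (dist_dist_dist_le_left (g x) (g y) (g r)).trans (hg.dist_le_mul x y)

lemma abs_deriv_distTo_le (hg : LipschitzWith K g) (r t : ℝ) : |deriv (distTo g r) t| ≤ K :=
  norm_deriv_le_of_lipschitz (lipschitz_distTo hg r)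

lemma abs_deriv_distTo_le_speed (hg : LipschitzWith K g) (q : ℚ) (t : ℝ) :
    |deriv (distTo g q) t| ≤ speed g t :=
  le_ciSup (f := fun q : ℚ => |deriv (distTo g q) t|)
    ⟨K, by rintro _ ⟨q, rfl⟩; exact abs_deriv_distTo_le hg q t⟩ q

lemma speed_nonneg (g : ℝ → X) (t : ℝ) : 0 ≤ speed g t :=
  Real.iSup_nonneg fun _ => abs_nonneg _

lemma speed_le (hg : LipschitzWith K g) (t : ℝ) : speed g t ≤ K :=
  ciSup_le fun q => abs_deriv_distTo_le hg q t

lemma measurable_speed (g : ℝ → X) : Measurable (speed g) :=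
  Measurable.iSup fun q => (measurable_deriv (distTo g q)).norm

lemma locallyIntegrable_speed (hg : LipschitzWith K g) : LocallyIntegrable (speed g) :=
  (locallyIntegrable_const (K : ℝ)).mono (measurable_speed g).aestronglyMeasurable <|
    Eventually.of_forall fun t => by
      rw [Real.norm_of_nonneg (speed_nonneg g t)]
      exact (speed_le hg t).trans (le_abs_self _)

lemma intervalIntegrable_speed (hg : LipschitzWith K g) (s t : ℝ) :
    IntervalIntegrable (speed g) volume s t :=
  intervalIntegrable_iff.2 <|
    ((locallyIntegrable_speed hg).integrableOn_isCompact isCompact_uIcc).mono_set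
      uIoc_subset_uIcc

lemma dist_le_integral_speed (hg : LipschitzWith K g) {s t : ℝ} (hst : s ≤ t) :
    dist (g t) (g s) ≤ ∫ τ in s..t, speed g τ := by
  have key : ∀ q : ℚ, distTo g q t - distTo g q s ≤ ∫ τ in s..t, speed g τ := fun q => by
    have hac : AbsolutelyContinuousOnInterval (distTo g q) s t :=
      (lipschitz_distTo hg q).lipschitzOnWith.absolutelyContinuousOnInterval
    rw [← hac.integral_deriv_eq_sub]
    exact intervalIntegral.integral_mono_on hst hac.intervalIntegrable_deriv
      (intervalIntegrable_speed hg s t)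
      fun τ _ => (le_abs_self _).trans (abs_deriv_distTo_le_speed hg q τ)
  have hall : ∀ r : ℝ, dist (g t) (g r) - dist (g s) (g r) ≤ ∫ τ in s..t, speed g τ := fun r =>
    Rat.denseRange_cast.induction_on r
      (isClosed_le ((continuous_const.dist hg.continuous).sub
        (continuous_const.dist hg.continuous)) continuous_const) key
  simpa using hall s

/-- At almost every time the difference quotients of `g` converge to `speed g`. -/
lemma ae_tendsto_speed (hg : LipschitzWith K g) :
    ∀ᵐ t : ℝ, Tendsto (fun s => dist (g s) (g t) / |s - t|)
      (nhdsWithin t {t}ᶜ) (nhds (speed g t)) := by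
  have hdiff : ∀ᵐ t : ℝ, ∀ q : ℚ, DifferentiableAt ℝ (distTo g q) t :=
    ae_all_iff.2 fun q => (lipschitz_distTo hg q).ae_differentiableAt_real
  filter_upwards [hdiff, LocallyIntegrable.ae_hasDerivAt_integral (locallyIntegrable_speed hg)] with t hd hF
  have habs : ∀ {f : ℝ → ℝ} {f' : ℝ}, HasDerivAt f f' t →
      Tendsto (fun s => |f s - f t| / |s - t|) (nhdsWithin t {t}ᶜ) (nhds |f'|) := fun h => by
    simpa only [slope_def_field, abs_div] using (hasDerivAt_iff_tendsto_slope.1 h).abs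
  refine tendsto_order.2 ⟨fun a ha => ?_, fun b hb => ?_⟩
  · obtain ⟨q, hq⟩ := exists_lt_of_lt_ciSup ha
    filter_upwards [(habs (hd q).hasDerivAt).eventually_const_lt hq] with s hs
    exact hs.trans_le (by gcongr; exact dist_dist_dist_le_left (g s) (g t) (g q))
  · have hFt := habs (hF t)
    rw [abs_of_nonneg (speed_nonneg g t)] at hFt
    filter_upwards [hFt.eventually_lt_const hb] with s hs
    refine lt_of_le_of_lt ?_ hs
    gcongr
    rw [intervalIntegral.integral_same, sub_zero]
    rcases le_total t s with h | h
    · exact (dist_le_integral_speed hg h).trans (le_abs_self _)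
    · rw [dist_comm, intervalIntegral.integral_symm, abs_neg]
      exact (dist_le_integral_speed hg h).trans (le_abs_self _)

end MetricDerivative

/-- for every Lipschitz curve `γ : [0,1] → X` in a metric space `X`, the metric
derivative `|γ'|(t) = lim_{s → t} d(γ(s), γ(t))/|s - t|` exists for a.e. `t ∈ [0,1]`, is
integrable, and `d(γ(t), γ(s)) ≤ ∫ₛᵗ |γ'|(τ) dτ` for all `s ≤ t` in `[0,1]`. -/
theorem stmt_3 {X : Type*} [MetricSpace X] (γ : ℝ → X) (K : ℝ≥0)
    (hγ : LipschitzOnWith K γ (Set.Icc 0 1)) :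
    ∃ m : ℝ → ℝ,
      (∀ᵐ t ∂(volume.restrict (Set.Icc (0 : ℝ) 1)),
        Tendsto (fun s => dist (γ s) (γ t) / |s - t|)
          (nhdsWithin t (Set.Icc (0 : ℝ) 1 \ {t})) (nhds (m t))) ∧
      IntegrableOn m (Set.Icc (0 : ℝ) 1) ∧
      ∀ s t : ℝ, s ∈ Set.Icc (0 : ℝ) 1 → t ∈ Set.Icc (0 : ℝ) 1 → s ≤ t →
        dist (γ t) (γ s) ≤ ∫ τ in s..t, m τ := by
  have h01 : (0 : ℝ) ≤ 1 := zero_le_one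
  let g : ℝ → X := IccExtend h01 ((Icc (0 : ℝ) 1).domRestrict γ)
  have hg : LipschitzWith K g := by
    have h := hγ.to_restrict.comp (LipschitzWith.projIcc h01)
    rwa [mul_one] at h
  have hgγ : ∀ t ∈ Icc (0 : ℝ) 1, g t = γ t := fun t ht => IccExtend_of_mem h01 _ ht
  refine ⟨MetricDerivative.speed g, ?_, ?_, fun s t hs ht hst => ?_⟩
  · filter_upwards [ae_restrict_of_ae (MetricDerivative.ae_tendsto_speed hg),
      ae_restrict_mem measurableSet_Icc] with t ht ht01
    refine (ht.mono_left (nhdsWithin_mono t fun s hs => hs.2)).congr' ?_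
    filter_upwards [self_mem_nhdsWithin] with s hs
    rw [hgγ s hs.1, hgγ t ht01]
  · exact (MetricDerivative.locallyIntegrable_speed hg).integrableOn_isCompact isCompact_Icc
  · rw [← hgγ s hs, ← hgγ t ht]
    exact MetricDerivative.dist_le_integral_speed hg hst
end

section
/- Let Ω ⊂ ℝ^d be compact, 0 < α < 1, and define F(ρ,q) = G_α(|v|^{1/α}·ρ) if q = v·ρ is absolutely continuous with respect to ρ with density v, and F(ρ,q) = +∞ otherwise, where G_α(λ) = ∑_i |λ_i|^α if λ = ∑_i λ_i δ_{x_i} is purely atomic and G_α(λ) = +∞ otherwise. Then F is lower semicontinuous with respect to weak* convergence of the pair of measures (ρ,q) on Ω. -/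
open MeasureTheory Set Filter
open scoped NNReal ENNReal Classical

/-- Euclidean space `ℝ^d`. -/
abbrev Euc (d : ℕ) := EuclideanSpace ℝ (Fin d)

/-- Integral of a function against a signed measure, via the Jordan decomposition. -/
noncomputable def sInt {E : Type*} [MeasurableSpace E] (f : E → ℝ) (s : SignedMeasure E) :
    ℝ :=
  ∫ x, f x ∂s.toJordanDecomposition.posPart -
    ∫ x, f x ∂s.toJordanDecomposition.negPart

/-- The concentration functional `G_α(λ) = ∑ᵢ |λᵢ|^α` if `λ = ∑ᵢ λᵢ δ_{xᵢ}` is purely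
atomic, and `+∞` otherwise. -/
noncomputable def Ga {E : Type*} [MeasurableSpace E] (α : ℝ) (μ : Measure E) : ℝ≥0∞ :=
  if ∃ s : Set E, s.Countable ∧ μ sᶜ = 0 then
    ∑' x : {x : E // μ {x} ≠ 0}, μ {x.1} ^ α
  else ⊤

/-- The branched-transport integrand `F(ρ,q) = G_α(|v|^{1/α}·ρ)` if `q = v·ρ` is
absolutely continuous with respect to `ρ` with (vector) density `v`, and `+∞` otherwise
(the infimum over an empty family being `+∞`; the density is `ρ`-a.e. unique, so all
representatives give the same value). -/
noncomputable def Fc {d : ℕ} (α : ℝ) (ρ : Measure (Euc d))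
    (q : Fin d → SignedMeasure (Euc d)) : ℝ≥0∞ :=
  ⨅ v ∈ {v : Euc d → Euc d |
      (∀ i, Integrable (fun x => v x i) ρ) ∧
      ∀ i, ∀ s : Set (Euc d), MeasurableSet s → q i s = ∫ x in s, v x i ∂ρ},
    Ga α (ρ.withDensity fun x => ENNReal.ofReal (‖v x‖ ^ (1 / α)))

/-- Total variation of the `ℝ^m`-valued measure `σ` (given through its `m` signed-measure
components): the supremum over finite measurable partitions of the sums of the Euclidean
norms of the values of `σ`. -/
noncomputable def tvVec {m : ℕ} {E : Type*} [MeasurableSpace E]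
    (σ : Fin m → SignedMeasure E) : ℝ≥0∞ :=
  ⨆ (n : ℕ) (A : Fin n → Set E) (_ : ∀ k, MeasurableSet (A k))
    (_ : Pairwise (Function.onFun Disjoint A)),
    ∑ k, ENNReal.ofReal (Real.sqrt (∑ i, σ i (A k) ^ 2))

/-- The continuity equation `∂ₜρ + div_x q = 0` on `[0,1] × Ω` with no-flux boundary
conditions, in the sense of distributions: for every `C¹` test function `φ(t,x)` vanishing
at `t = 0` and `t = 1`, `∫₀¹ [∫ ∂ₜφ dρₜ + ∫ D_xφ · dqₜ] dt = 0`. -/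
noncomputable def ContEq {d : ℕ} (ρ : ℝ → Measure (Euc d))
    (q : ℝ → Fin d → SignedMeasure (Euc d)) : Prop :=
  ∀ φ : ℝ × Euc d → ℝ, ContDiff ℝ 1 φ → (∀ x, φ (0, x) = 0) → (∀ x, φ (1, x) = 0) →
    (∫ t in (0:ℝ)..1,
      ((∫ x, fderiv ℝ φ (t, x) ((1 : ℝ), (0 : Euc d)) ∂(ρ t)) +
        ∑ i, sInt (fun x => fderiv ℝ φ (t, x) ((0 : ℝ), EuclideanSpace.single i 1))
          (q t i))) = 0

/-- The class `𝒟`: pairs `(ρ, q)` with `ρ ∈ C([0,1]; 𝒫(Ω))` (probability measures on `Ω`,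
weakly* continuous in time) and `q ∈ L¹([0,1]; ℳ(Ω; ℝ^d))`, satisfying the continuity
equation with no-flux boundary conditions. -/
def MemD {d : ℕ} (Ω : Set (Euc d)) (ρ : ℝ → Measure (Euc d))
    (q : ℝ → Fin d → SignedMeasure (Euc d)) : Prop :=
  (∀ t ∈ Icc (0:ℝ) 1, IsProbabilityMeasure (ρ t) ∧ ρ t Ωᶜ = 0) ∧
  (∀ f : Euc d → ℝ, Continuous f →
    ContinuousOn (fun t => ∫ x, f x ∂(ρ t)) (Icc 0 1)) ∧
  (∀ t ∈ Icc (0:ℝ) 1, ∀ i,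
    (q t i).toJordanDecomposition.posPart Ωᶜ = 0 ∧
    (q t i).toJordanDecomposition.negPart Ωᶜ = 0) ∧
  (∀ i, ∀ s : Set (Euc d), MeasurableSet s → Measurable fun t => q t i s) ∧
  (∫⁻ t in Icc (0:ℝ) 1, tvVec (q t)) < ⊤ ∧
  ContEq ρ q

/-- The branched transport functional `ℱ(ρ,q) = ∫₀¹ F(ρₜ,qₜ) dt`. -/
noncomputable def BigF {d : ℕ} (α : ℝ) (ρ : ℝ → Measure (Euc d))
    (q : ℝ → Fin d → SignedMeasure (Euc d)) : ℝ≥0∞ :=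
  ∫⁻ t in Icc (0:ℝ) 1, Fc α (ρ t) (q t)

/-- `τ`-convergence of a sequence `(ρⁿ,qⁿ)` to `(ρ,q)`: weak* convergence of the pairs as
measures on `[0,1] × Ω`, together with `sup { F(ρⁿₜ,qⁿₜ) : n ∈ ℕ, t ∈ [0,1] } < +∞`. -/
def TauConv {d : ℕ} (α : ℝ) (ρn : ℕ → ℝ → Measure (Euc d))
    (qn : ℕ → ℝ → Fin d → SignedMeasure (Euc d))
    (ρ : ℝ → Measure (Euc d)) (q : ℝ → Fin d → SignedMeasure (Euc d)) : Prop :=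
  (∀ φ : ℝ × Euc d → ℝ, Continuous φ →
    Tendsto (fun n => ∫ t in (0:ℝ)..1, ∫ x, φ (t, x) ∂(ρn n t)) atTop
      (nhds (∫ t in (0:ℝ)..1, ∫ x, φ (t, x) ∂(ρ t)))) ∧
  (∀ i : Fin d, ∀ φ : ℝ × Euc d → ℝ, Continuous φ →
    Tendsto (fun n => ∫ t in (0:ℝ)..1, sInt (fun x => φ (t, x)) (qn n t i)) atTop
      (nhds (∫ t in (0:ℝ)..1, sInt (fun x => φ (t, x)) (q t i)))) ∧
  ∃ M : ℝ≥0∞, M < ⊤ ∧ ∀ n, ∀ t ∈ Icc (0:ℝ) 1, Fc α (ρn n t) (qn n t) ≤ M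

/-!
If `q = v·ρ` has finite energy, then `q` is carried by countably many points `x`, and with
`m(x) = ρ{x}` the energy is `∑ |q{x}| m(x)^(α-1)`. For `0 ≤ φ ≤ 1` continuous,
`φ(x) m(x) ≤ ∫ φ dρ` gives `φ(x) m(x) (∫ φ dρ)^(α-1) ≤ m(x)^α`. Summing over the atoms, and over
finitely many test functions `φⱼ` with disjoint supports, yields (`energy_ge_test`)
`∑ⱼ |∫ φⱼ dq| (∫ φⱼ dρ + ε)^(α-1) ≤ F(ρ,q)` for every `ε > 0`.

The left side is weak* continuous, so the limit pair satisfies the same bounds with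
`L = liminf F(ρₙ,qₙ)` in place of the energy (`testBound_liminf`). It remains to see that these
bounds force `F(ρ,q) ≤ L` (`TestBound.energy_le`). Approximation turns the test functions into
disjoint compact sets, then into disjoint measurable sets:
`∑ⱼ |q(Aⱼ)| (ρ(Aⱼ) + ε)^(α-1) ≤ L`. A set containing no atom of `ρ` splits into finitely many
pieces of `ρ`-mass at most `ε`, hence has `|q(A)| ≤ L (2ε)^(1-α)` and `q(A) = 0`
(`TestBound.vanish`). Since every set meeting the atoms of `ρ` has positive mass, this gives at
once `q ≪ ρ` and the atomicity of `q`. Taking the `Aⱼ` to be atoms and letting `ε → 0` bounds the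
energy. No compactness argument or subsequence is needed.
-/

/-! ### Integration against signed measures -/

/-- The value on a set of a vector measure given by its signed components. -/
noncomputable def vecVal {d : ℕ} (q : Fin d → SignedMeasure (Euc d)) (S : Set (Euc d)) : Euc d :=
  WithLp.toLp 2 fun i => q i S

/-- The integral of a scalar function against a vector measure given by its signed components. -/
noncomputable def vecInt {d : ℕ} (q : Fin d → SignedMeasure (Euc d)) (φ : Euc d → ℝ) : Euc d :=
  WithLp.toLp 2 fun i => sInt φ (q i)

lemma signed_apply_eq_real {E : Type*} [MeasurableSpace E] (s : SignedMeasure E) {S : Set E}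
    (hS : MeasurableSet S) :
    s S = s.toJordanDecomposition.posPart.real S - s.toJordanDecomposition.negPart.real S := by
  conv_lhs => rw [← s.toSignedMeasure_toJordanDecomposition]
  rw [JordanDecomposition.toSignedMeasure, _root_.sub_apply,
    Measure.toSignedMeasure_apply_measurable hS, Measure.toSignedMeasure_apply_measurable hS]

lemma integrable_of_continuous_unit {d : ℕ} (μ : Measure (Euc d)) [IsFiniteMeasure μ]
    {φ : Euc d → ℝ} (hc : Continuous φ) (h0 : ∀ x, 0 ≤ φ x) (h1 : ∀ x, φ x ≤ 1) :
    Integrable φ μ :=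
  Integrable.of_bound hc.aestronglyMeasurable 1
    (ae_of_all _ fun x => by rw [Real.norm_eq_abs, abs_of_nonneg (h0 x)]; exact h1 x)

/-- Integration against a signed measure with density `f`: the difference of any two finite
measures representing the signed measure gives the same integral as its Jordan decomposition. -/
lemma sInt_eq_integral_mul {d : ℕ} (ρ : Measure (Euc d))
    (s : SignedMeasure (Euc d)) {f : Euc d → ℝ} (hf : Integrable f ρ)
    (hs : ∀ S : Set (Euc d), MeasurableSet S → s S = ∫ x in S, f x ∂ρ)
    {φ : Euc d → ℝ} (hc : Continuous φ) (h0 : ∀ x, 0 ≤ φ x) (h1 : ∀ x, φ x ≤ 1) :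
    sInt φ s = ∫ x, φ x * f x ∂ρ := by
  have hs' : s = ρ.withDensityᵥ f := by
    ext S hS
    rw [hs S hS, withDensityᵥ_apply hf hS]
  have hfA : IsFiniteMeasure (ρ.withDensity fun x => ENNReal.ofReal (f x)) :=
    isFiniteMeasure_withDensity_ofReal hf.2
  have hfB : IsFiniteMeasure (ρ.withDensity fun x => ENNReal.ofReal (-f x)) :=
    isFiniteMeasure_withDensity_ofReal hf.neg.2
  set A := ρ.withDensity fun x => ENNReal.ofReal (f x) with hA
  set B := ρ.withDensity fun x => ENNReal.ofReal (-f x) with hB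
  set P := s.toJordanDecomposition.posPart with hP
  set N := s.toJordanDecomposition.negPart with hN
  have e1 : P.toSignedMeasure - N.toSignedMeasure = A.toSignedMeasure - B.toSignedMeasure := by
    have h := withDensityᵥ_eq_withDensity_pos_part_sub_withDensity_neg_part hf
    rw [← hs'] at h
    exact s.toSignedMeasure_toJordanDecomposition.trans h
  have e2 : P + B = A + N := by
    rw [← Measure.toSignedMeasure_eq_toSignedMeasure_iff, Measure.toSignedMeasure_add,
      Measure.toSignedMeasure_add]
    exact sub_eq_sub_iff_add_eq_add.1 e1
  have i1 := fun (μ : Measure (Euc d)) [IsFiniteMeasure μ] =>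
    integrable_of_continuous_unit μ hc h0 h1
  have e3 : ∫ x, φ x ∂P + ∫ x, φ x ∂B = ∫ x, φ x ∂A + ∫ x, φ x ∂N := by
    rw [← integral_add_measure (i1 P) (i1 B), ← integral_add_measure (i1 A) (i1 N), e2]
  have e4 : ∫ x, φ x ∂A = ∫ x, (ENNReal.ofReal (f x)).toReal • φ x ∂ρ :=
    integral_withDensity_eq_integral_toReal_smul₀ hf.1.aemeasurable.ennreal_ofReal
      (ae_of_all _ fun _ => ENNReal.ofReal_lt_top) _
  have e5 : ∫ x, φ x ∂B = ∫ x, (ENNReal.ofReal (-f x)).toReal • φ x ∂ρ :=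
    integral_withDensity_eq_integral_toReal_smul₀ hf.1.aemeasurable.neg.ennreal_ofReal
      (ae_of_all _ fun _ => ENNReal.ofReal_lt_top) _
  have hb : ∀ᵐ x ∂ρ, ‖φ x‖ ≤ 1 :=
    ae_of_all _ fun x => by rw [Real.norm_eq_abs, abs_of_nonneg (h0 x)]; exact h1 x
  have e6 : ∫ x, φ x ∂A - ∫ x, φ x ∂B = ∫ x, φ x * f x ∂ρ := by
    rw [e4, e5, ← integral_sub]
    · refine integral_congr_ae (ae_of_all _ fun x => ?_)
      simp only [smul_eq_mul, ← sub_mul]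
      rw [mul_comm]
      congr 1
      rcases le_total 0 (f x) with h | h
      · rw [ENNReal.toReal_ofReal h, ENNReal.ofReal_of_nonpos (by linarith)]; simp
      · rw [ENNReal.toReal_ofReal (by linarith : 0 ≤ -f x), ENNReal.ofReal_of_nonpos h]; simp
    · simp only [smul_eq_mul]
      exact hf.real_toNNReal.mul_bdd hc.aestronglyMeasurable hb
    · simp only [smul_eq_mul]
      exact hf.neg.real_toNNReal.mul_bdd hc.aestronglyMeasurable hb
  rw [← e6]
  change ∫ x, φ x ∂P - ∫ x, φ x ∂N = _
  linarith

/-! ### The lower bound by test functions -/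

lemma mul_rpow_sub_one_le {α t R : ℝ} (hα' : α < 1) (ht : 0 ≤ t) (hR : t ≤ R) :
    t * R ^ (α - 1) ≤ t ^ α := by
  rcases ht.eq_or_lt with rfl | ht
  · rw [zero_mul]; exact Real.rpow_nonneg le_rfl _
  · calc t * R ^ (α - 1) ≤ t * t ^ (α - 1) :=
        mul_le_mul_of_nonneg_left (Real.rpow_le_rpow_of_nonpos ht hR (by linarith)) ht.le
      _ = t ^ α := by
        conv_lhs => rw [← Real.rpow_one t, ← Real.rpow_mul ht.le, one_mul, ← Real.rpow_add ht]
        congr 1; ring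

lemma withDensity_singleton_rpow {d : ℕ} {α : ℝ} (hα : 0 < α) (ρ : Measure (Euc d))
    [IsFiniteMeasure ρ] (v : Euc d → Euc d) (x : Euc d) :
    (ρ.withDensity fun x => ENNReal.ofReal (‖v x‖ ^ (1 / α))) {x} ^ α =
      ENNReal.ofReal (‖v x‖ * ρ.real {x} ^ α) := by
  have h0 : 0 ≤ ‖v x‖ ^ (1 / α) := Real.rpow_nonneg (norm_nonneg _) _
  rw [withDensity_apply _ (measurableSet_singleton x), lintegral_singleton,
    ← ofReal_measureReal, ← ENNReal.ofReal_mul h0,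
    ENNReal.ofReal_rpow_of_nonneg (mul_nonneg h0 measureReal_nonneg) hα.le,
    Real.mul_rpow h0 measureReal_nonneg, ← Real.rpow_mul (norm_nonneg _),
    one_div_mul_cancel hα.ne', Real.rpow_one]

/-- For test functions with disjoint supports, the energy controls the sum of the
vector masses weighted by the `(α-1)`-th power of the scalar masses. The regularization `ε`
keeps the weights continuous in the scalar mass. -/
lemma energy_ge_test {d : ℕ} {α : ℝ} (hα : 0 < α) (hα' : α < 1)
    (ρ : Measure (Euc d)) [IsFiniteMeasure ρ] (q : Fin d → SignedMeasure (Euc d))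
    {J : Type*} [Fintype J] (φ : J → Euc d → ℝ) (hc : ∀ j, Continuous (φ j))
    (h0 : ∀ j x, 0 ≤ φ j x) (h1 : ∀ j x, φ j x ≤ 1)
    (hdis : ∀ x j k, φ j x ≠ 0 → φ k x ≠ 0 → j = k) {ε : ℝ} (hε : 0 < ε) :
    ENNReal.ofReal (∑ j, ‖vecInt q (φ j)‖ * (∫ x, φ j x ∂ρ + ε) ^ (α - 1)) ≤ Fc α ρ q := by
  unfold Fc
  refine le_iInf₂ fun v hv => ?_
  obtain ⟨hvi, hvq⟩ := hv
  unfold Ga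
  split_ifs with hat
  swap
  · exact le_top
  obtain ⟨s, hs, hs0⟩ := hat
  have hvint : Integrable v ρ := Integrable.of_eval_piLp hvi
  have hr0 : ∀ j, 0 ≤ ∫ x, φ j x ∂ρ := fun j => integral_nonneg (h0 j)
  have hzero : ∀ᵐ x ∂(ρ.restrict sᶜ), v x = 0 := by
    rw [withDensity_apply _ hs.measurableSet.compl, lintegral_eq_zero_iff'
      ((hvint.1.norm.aemeasurable.pow_const _).ennreal_ofReal.restrict)] at hs0
    filter_upwards [hs0] with x hx
    have h2 : ‖v x‖ ^ (1 / α) ≤ 0 := ENNReal.ofReal_eq_zero.1 hx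
    have h3 := le_antisymm h2 (Real.rpow_nonneg (norm_nonneg _) _)
    exact norm_eq_zero.1 ((Real.rpow_eq_zero (norm_nonneg _) (one_div_pos.2 hα).ne').1 h3)
  have key1 : ∀ j, ENNReal.ofReal ‖vecInt q (φ j)‖ ≤
      ∑' x : s, ENNReal.ofReal (φ j x * ‖v x‖) * ρ {x.1} := by
    intro j
    have hb : ∀ᵐ x ∂ρ, ‖φ j x‖ ≤ 1 :=
      ae_of_all _ fun x => by rw [Real.norm_eq_abs, abs_of_nonneg (h0 j x)]; exact h1 j x
    have e1 : vecInt q (φ j) = ∫ x, φ j x • v x ∂ρ := by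
      ext i
      rw [eval_integral_piLp]
      · simp only [vecInt, PiLp.smul_apply, smul_eq_mul]
        exact sInt_eq_integral_mul ρ (q i) (hvi i) (hvq i) (hc j) (h0 j) (h1 j)
      · intro i
        simp only [PiLp.smul_apply, smul_eq_mul]
        exact (hvi i).bdd_mul (hc j).aestronglyMeasurable hb
    have e2 : ∀ x, ‖φ j x • v x‖ₑ = ENNReal.ofReal (φ j x * ‖v x‖) := fun x => by
      rw [← ofReal_norm, norm_smul, Real.norm_eq_abs, abs_of_nonneg (h0 j x)]
    rw [e1, ofReal_norm, ← lintegral_countable (fun x => ENNReal.ofReal (φ j x * ‖v x‖)) hs]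
    refine (enorm_integral_le_lintegral_enorm _).trans ?_
    rw [← lintegral_add_compl _ hs.measurableSet]
    have e3 : ∫⁻ x in sᶜ, ‖φ j x • v x‖ₑ ∂ρ = 0 := by
      rw [lintegral_congr_ae (g := fun _ => 0)]
      · simp
      · filter_upwards [hzero] with x hx
        simp [hx]
    rw [e3, add_zero]
    simp only [e2]
    exact le_rfl
  have key2 : ∀ x, ∑ j, ENNReal.ofReal (φ j x * ‖v x‖) * ρ {x} *
      ENNReal.ofReal ((∫ x, φ j x ∂ρ + ε) ^ (α - 1)) ≤
      (ρ.withDensity fun x => ENNReal.ofReal (‖v x‖ ^ (1 / α))) {x} ^ α := by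
    intro x
    by_cases hx : ∃ j, φ j x ≠ 0
    swap
    · push Not at hx
      simp [hx]
    obtain ⟨j, hj⟩ := hx
    rw [Finset.sum_eq_single j]
    · rw [withDensity_singleton_rpow hα, ← ofReal_measureReal,
        ← ENNReal.ofReal_mul (mul_nonneg (h0 _ _) (norm_nonneg _)),
        ← ENNReal.ofReal_mul (by have := h0 j x; positivity)]
      refine ENNReal.ofReal_le_ofReal ?_
      have hm : φ j x * ρ.real {x} ≤ ∫ x, φ j x ∂ρ := by
        have h := setIntegral_le_integral (s := {x})
          (integrable_of_continuous_unit ρ (hc j) (h0 j) (h1 j)) (ae_of_all _ (h0 j))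
        rwa [integral_singleton, smul_eq_mul, mul_comm] at h
      have h2 := mul_rpow_sub_one_le hα'
        (mul_nonneg (h0 j x) (measureReal_nonneg (μ := ρ) (s := {x})))
        (hm.trans (le_add_of_nonneg_right hε.le))
      have h3 : (φ j x * ρ.real {x}) ^ α ≤ ρ.real {x} ^ α :=
        Real.rpow_le_rpow (mul_nonneg (h0 j x) measureReal_nonneg)
          (mul_le_of_le_one_left measureReal_nonneg (h1 j x)) hα.le
      calc _ = ‖v x‖ * (φ j x * ρ.real {x} * (∫ x, φ j x ∂ρ + ε) ^ (α - 1)) := by ring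
        _ ≤ _ := mul_le_mul_of_nonneg_left (h2.trans h3) (norm_nonneg _)
    · intro k _ hk
      have : φ k x = 0 := by
        by_contra h
        exact hk (hdis x k j h hj)
      simp [this]
    · simp
  set μ := ρ.withDensity fun x => ENNReal.ofReal (‖v x‖ ^ (1 / α)) with hμ
  calc ENNReal.ofReal (∑ j, ‖vecInt q (φ j)‖ * (∫ x, φ j x ∂ρ + ε) ^ (α - 1))
      = ∑ j, ENNReal.ofReal ‖vecInt q (φ j)‖ *
          ENNReal.ofReal ((∫ x, φ j x ∂ρ + ε) ^ (α - 1)) := by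
        rw [ENNReal.ofReal_sum_of_nonneg]
        · exact Finset.sum_congr rfl fun j _ => ENNReal.ofReal_mul (norm_nonneg _)
        · intro j _
          have := hr0 j
          positivity
    _ ≤ ∑ j, (∑' x : s, ENNReal.ofReal (φ j x * ‖v x‖) * ρ {x.1}) *
          ENNReal.ofReal ((∫ x, φ j x ∂ρ + ε) ^ (α - 1)) := by
        gcongr with j
        exact key1 j
    _ = ∑' x : s, ∑ j, ENNReal.ofReal (φ j x * ‖v x‖) * ρ {x.1} *
          ENNReal.ofReal ((∫ x, φ j x ∂ρ + ε) ^ (α - 1)) := by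
        simp only [← ENNReal.tsum_mul_right]
        exact (Summable.tsum_finsetSum fun _ _ => ENNReal.summable).symm
    _ ≤ ∑' x : s, μ {x.1} ^ α := ENNReal.tsum_le_tsum fun x => key2 x
    _ ≤ ∑' x : {x | μ {x} ≠ 0}, μ {x.1} ^ α := by
        rw [tsum_subtype s fun x => μ {x} ^ α, tsum_subtype {x | μ {x} ≠ 0} fun x => μ {x} ^ α]
        refine ENNReal.tsum_le_tsum fun x => ?_
        by_cases hx : μ {x} = 0
        · have : s.indicator (fun x => μ {x} ^ α) x = 0 := by
            rw [Set.indicator_apply, hx, ENNReal.zero_rpow_of_pos hα, ite_self]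
          rw [this]
          exact zero_le
        · rw [Set.indicator_of_mem (show x ∈ {x | μ {x} ≠ 0} from hx)]
          exact Set.indicator_le_self' (fun _ _ => zero_le) x

/-! ### Passage to the limit and to measurable sets -/

/-- The bound of `energy_ge_test`, with an arbitrary constant `L` in place of the energy. It is a
closed condition on the pair `(ρ, q)` for weak* convergence. -/
def TestBound {d : ℕ} (α : ℝ) (ρ : Measure (Euc d)) (q : Fin d → SignedMeasure (Euc d))
    (L : ℝ≥0∞) : Prop :=
  ∀ (J : Type) [Fintype J] (φ : J → Euc d → ℝ), (∀ j, Continuous (φ j)) →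
    (∀ j x, 0 ≤ φ j x) → (∀ j x, φ j x ≤ 1) →
    (∀ x j k, φ j x ≠ 0 → φ k x ≠ 0 → j = k) → ∀ ε : ℝ, 0 < ε →
    ENNReal.ofReal (∑ j, ‖vecInt q (φ j)‖ * (∫ x, φ j x ∂ρ + ε) ^ (α - 1)) ≤ L

lemma testBound_liminf {d : ℕ} {α : ℝ} (hα : 0 < α) (hα' : α < 1)
    (ρn : ℕ → Measure (Euc d)) (qn : ℕ → Fin d → SignedMeasure (Euc d))
    (ρ : Measure (Euc d)) (q : Fin d → SignedMeasure (Euc d))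
    (hρn : ∀ n, IsFiniteMeasure (ρn n))
    (hwρ : ∀ f : Euc d → ℝ, Continuous f →
      Tendsto (fun n => ∫ x, f x ∂(ρn n)) atTop (nhds (∫ x, f x ∂ρ)))
    (hwq : ∀ i : Fin d, ∀ f : Euc d → ℝ, Continuous f →
      Tendsto (fun n => sInt f (qn n i)) atTop (nhds (sInt f (q i)))) :
    TestBound α ρ q (liminf (fun n => Fc α (ρn n) (qn n)) atTop) := by
  intro J _ φ hc h0 h1 hdis ε hε
  have ht : Tendsto (fun n => ENNReal.ofReal
      (∑ j, ‖vecInt (qn n) (φ j)‖ * (∫ x, φ j x ∂(ρn n) + ε) ^ (α - 1))) atTop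
      (nhds (ENNReal.ofReal (∑ j, ‖vecInt q (φ j)‖ * (∫ x, φ j x ∂ρ + ε) ^ (α - 1)))) := by
    refine ENNReal.tendsto_ofReal (tendsto_finsetSum _ fun j _ => ?_)
    refine Tendsto.mul (Tendsto.norm ?_) (((hwρ _ (hc j)).add_const ε).rpow_const (Or.inl ?_))
    · exact ((PiLp.continuous_toLp 2 _).tendsto _).comp
        (tendsto_pi_nhds.2 fun i => hwq i _ (hc j))
    · have : 0 ≤ ∫ x, φ j x ∂ρ := integral_nonneg (h0 j)
      positivity
  rw [← ht.liminf_eq]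
  refine liminf_le_liminf (Eventually.of_forall fun n => ?_)
  have := hρn n
  exact energy_ge_test hα hα' (ρn n) (qn n) φ hc h0 h1 hdis hε

lemma tendsto_integral_thickenedIndicator {d : ℕ} (μ : Measure (Euc d)) [IsFiniteMeasure μ]
    {A : Set (Euc d)} (hA : IsClosed A) {δ : ℕ → ℝ} (hδ : ∀ n, 0 < δ n)
    (hδ0 : Tendsto δ atTop (nhds 0)) :
    Tendsto (fun n => ∫ x, (thickenedIndicator (hδ n) A x : ℝ) ∂μ) atTop (nhds (μ.real A)) := by
  have h1 : μ.real A = ∫ x, A.indicator (fun _ => (1 : ℝ)) x ∂μ := by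
    rw [integral_indicator hA.measurableSet]
    simp
  rw [h1]
  refine tendsto_integral_of_dominated_convergence (fun _ => 1) (fun n => ?_)
    (integrable_const _) (fun n => ae_of_all _ fun x => ?_) (ae_of_all _ fun x => ?_)
  · exact (NNReal.continuous_coe.comp
      (thickenedIndicator (hδ n) A).continuous).aestronglyMeasurable
  · rw [Real.norm_eq_abs, NNReal.abs_eq]
    exact_mod_cast thickenedIndicator_le_one (hδ n) A x
  · have h := tendsto_pi_nhds.1 (thickenedIndicator_tendsto_indicator_closure hδ hδ0 A) x
    rw [hA.closure_eq] at h
    have h2 := (NNReal.continuous_coe.tendsto _).comp h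
    have e : ((A.indicator (fun _ => (1 : ℝ≥0)) x : ℝ≥0) : ℝ) = A.indicator (fun _ => (1 : ℝ)) x := by
      by_cases hx : x ∈ A <;> simp [hx]
    rw [e] at h2
    exact h2

/-- Passing from test functions to disjoint compact sets by shrinking thickened indicators. -/
lemma TestBound.compact {d : ℕ} {α : ℝ} {ρ : Measure (Euc d)} [IsFiniteMeasure ρ]
    {q : Fin d → SignedMeasure (Euc d)} {L : ℝ≥0∞} (H : TestBound α ρ q L)
    {J : Type} [Fintype J] (A : J → Set (Euc d)) (hA : ∀ j, IsCompact (A j))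
    (hdis : Pairwise (Function.onFun Disjoint A)) {ε : ℝ} (hε : 0 < ε) :
    ENNReal.ofReal (∑ j, ‖vecVal q (A j)‖ * (ρ.real (A j) + ε) ^ (α - 1)) ≤ L := by
  have hδ : ∀ n : ℕ, 0 < 1 / ((n : ℝ) + 1) := fun n => by positivity
  have hδ0 : Tendsto (fun n : ℕ => 1 / ((n : ℝ) + 1)) atTop (nhds 0) :=
    tendsto_one_div_add_atTop_nhds_zero_nat
  set φ : ℕ → J → Euc d → ℝ := fun n j x => (thickenedIndicator (hδ n) (A j) x : ℝ) with hφ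
  have hcl : ∀ j, IsClosed (A j) := fun j => (hA j).isClosed
  have ht : Tendsto (fun n => ENNReal.ofReal
      (∑ j, ‖vecInt q (φ n j)‖ * (∫ x, φ n j x ∂ρ + ε) ^ (α - 1))) atTop
      (nhds (ENNReal.ofReal (∑ j, ‖vecVal q (A j)‖ * (ρ.real (A j) + ε) ^ (α - 1)))) := by
    refine ENNReal.tendsto_ofReal (tendsto_finsetSum _ fun j _ => ?_)
    refine Tendsto.mul (Tendsto.norm ?_)
      (((tendsto_integral_thickenedIndicator ρ (hcl j) hδ hδ0).add_const ε).rpow_const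
        (Or.inl ?_))
    · refine ((PiLp.continuous_toLp 2 _).tendsto _).comp (tendsto_pi_nhds.2 fun i => ?_)
      rw [signed_apply_eq_real _ (hcl j).measurableSet]
      exact (tendsto_integral_thickenedIndicator _ (hcl j) hδ hδ0).sub
        (tendsto_integral_thickenedIndicator _ (hcl j) hδ hδ0)
    · have : 0 ≤ ρ.real (A j) := measureReal_nonneg
      positivity
  refine le_of_tendsto ht ?_
  have hev : ∀ᶠ n : ℕ in atTop, ∀ j k, j ≠ k →
      Disjoint (Metric.thickening (1 / ((n : ℝ) + 1)) (A j))
        (Metric.thickening (1 / ((n : ℝ) + 1)) (A k)) := by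
    refine eventually_all.2 fun j => eventually_all.2 fun k => ?_
    by_cases hjk : j = k
    · exact Eventually.of_forall fun n h => absurd hjk h
    obtain ⟨η, hη, hd⟩ := (hdis hjk).exists_thickenings (hA j) (hcl k)
    filter_upwards [hδ0.eventually (gt_mem_nhds hη)] with n hn _
    exact hd.mono (Metric.thickening_mono hn.le _) (Metric.thickening_mono hn.le _)
  filter_upwards [hev] with n hn
  refine H J (φ n) (fun j => ?_) (fun j x => NNReal.coe_nonneg _) (fun j x => ?_) ?_ ε hε
  · exact NNReal.continuous_coe.comp (thickenedIndicator (hδ n) (A j)).continuous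
  · change ((thickenedIndicator (hδ n) (A j) x : ℝ≥0) : ℝ) ≤ 1
    exact_mod_cast thickenedIndicator_le_one (hδ n) (A j) x
  · have hmem : ∀ j x, φ n j x ≠ 0 → x ∈ Metric.thickening (1 / ((n : ℝ) + 1)) (A j) := by
      intro j x hx
      by_contra h
      exact hx (by simp only [hφ]; rw [thickenedIndicator_zero (hδ n) _ h]; rfl)
    intro x j k hj hk
    by_contra hjk
    exact Set.disjoint_left.1 (hn j k hjk) (hmem j x hj) (hmem k x hk)

/-- Passing from compact to measurable sets by inner regularity of `ρ + ∑ᵢ |qᵢ|`. -/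
lemma TestBound.measurable {d : ℕ} {α : ℝ} {ρ : Measure (Euc d)} [IsFiniteMeasure ρ]
    {q : Fin d → SignedMeasure (Euc d)} {L : ℝ≥0∞} (H : TestBound α ρ q L)
    {J : Type} [Fintype J] (A : J → Set (Euc d)) (hA : ∀ j, MeasurableSet (A j))
    (hdis : Pairwise (Function.onFun Disjoint A)) {ε : ℝ} (hε : 0 < ε) :
    ENNReal.ofReal (∑ j, ‖vecVal q (A j)‖ * (ρ.real (A j) + ε) ^ (α - 1)) ≤ L := by
  set μ : Measure (Euc d) := ρ + ∑ i, ((q i).toJordanDecomposition.posPart +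
    (q i).toJordanDecomposition.negPart) with hμ
  have hδ0 : Tendsto (fun n : ℕ => 1 / ((n : ℝ) + 1)) atTop (nhds 0) :=
    tendsto_one_div_add_atTop_nhds_zero_nat
  have hK : ∀ (n : ℕ) (j : J), ∃ K ⊆ A j, IsCompact K ∧
      μ (A j \ K) < ENNReal.ofReal (1 / ((n : ℝ) + 1)) := fun n j =>
    (hA j).exists_isCompact_sdiff_lt (measure_ne_top _ _)
      (ENNReal.ofReal_pos.2 (by positivity)).ne'
  choose K hKs hKc hKm using hK
  have hreal : ∀ ν : Measure (Euc d), IsFiniteMeasure ν → ν ≤ μ → ∀ j,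
      Tendsto (fun n => ν.real (K n j)) atTop (nhds (ν.real (A j))) := by
    intro ν _ hν j
    refine tendsto_of_tendsto_of_tendsto_of_le_of_le
      (g := fun n : ℕ => ν.real (A j) - 1 / ((n : ℝ) + 1)) (h := fun _ => ν.real (A j))
      ?_ tendsto_const_nhds (fun n => ?_) (fun n => measureReal_mono (hKs n j))
    · simpa using hδ0.const_sub (ν.real (A j))
    · have h1 : ν.real (A j \ K n j) ≤ 1 / ((n : ℝ) + 1) :=
        ENNReal.toReal_le_of_le_ofReal (by positivity)
          ((hν _).trans (hKm n j).le)
      have h2 := measureReal_sdiff (μ := ν) (hKs n j) (hKc n j).measurableSet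
      simp only
      linarith
  have hle : ∀ i, (q i).toJordanDecomposition.posPart + (q i).toJordanDecomposition.negPart ≤ μ :=
    fun i => (Finset.single_le_sum (f := fun i => (q i).toJordanDecomposition.posPart +
      (q i).toJordanDecomposition.negPart) (fun _ _ => Measure.zero_le _)
      (Finset.mem_univ i)).trans (Measure.le_add_left le_rfl)
  have ht : Tendsto (fun n => ENNReal.ofReal
      (∑ j, ‖vecVal q (K n j)‖ * (ρ.real (K n j) + ε) ^ (α - 1))) atTop
      (nhds (ENNReal.ofReal (∑ j, ‖vecVal q (A j)‖ * (ρ.real (A j) + ε) ^ (α - 1)))) := by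
    refine ENNReal.tendsto_ofReal (tendsto_finsetSum _ fun j _ => ?_)
    refine Tendsto.mul (Tendsto.norm ?_)
      (((hreal ρ inferInstance (Measure.le_add_right le_rfl) j).add_const ε).rpow_const
        (Or.inl ?_))
    · refine ((PiLp.continuous_toLp 2 _).tendsto _).comp (tendsto_pi_nhds.2 fun i => ?_)
      rw [signed_apply_eq_real _ (hA j)]
      simp only [fun n => signed_apply_eq_real (q i) (hKc n j).measurableSet]
      exact (hreal _ inferInstance ((Measure.le_add_right le_rfl).trans (hle i)) j).sub
        (hreal _ inferInstance ((Measure.le_add_left le_rfl).trans (hle i)) j)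
    · have : 0 ≤ ρ.real (A j) := measureReal_nonneg
      positivity
  exact le_of_tendsto ht (Eventually.of_forall fun n => H.compact (K n) (hKc n)
    (fun j k hjk => (hdis hjk).mono (hKs n j) (hKs n k)) hε)

/-! ### Recovering the energy from the bounds -/

/-- A finite measure carried by a compact set splits into finitely many pieces whose diffuse
part is small. -/
lemma exists_partition_small {d : ℕ} (ρ : Measure (Euc d)) [IsFiniteMeasure ρ]
    {Ω : Set (Euc d)} (hΩ : IsCompact Ω) (hρΩ : ρ Ωᶜ = 0)
    {D : Set (Euc d)} (hat : ∀ x ∉ D, ρ {x} = 0)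
    {ε : ℝ≥0∞} (hε : 0 < ε) :
    ∃ (n : ℕ) (B : Fin n → Set (Euc d)), (∀ j, MeasurableSet (B j)) ∧
      Pairwise (Function.onFun Disjoint B) ∧ (⋃ j, B j) = univ ∧ ∀ j, ρ (B j ∩ Dᶜ) ≤ ε := by
  have hU : ∀ x, ∃ U ⊇ {x}, IsOpen U ∧ (ρ.restrict Dᶜ) U < ε := fun x => by
    refine Set.exists_isOpen_lt_of_lt {x} ε ?_
    rw [Measure.restrict_apply (measurableSet_singleton x)]
    by_cases hx : x ∈ D
    · rw [show ({x} : Set (Euc d)) ∩ Dᶜ = ∅ by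
        rw [singleton_inter_eq_empty]; exact fun h => h hx, measure_empty]
      exact hε
    · exact (measure_mono inter_subset_left).trans_lt ((hat x hx).trans_lt hε)
  choose U hUx hUo hUm using hU
  obtain ⟨t, -, ht⟩ := hΩ.elim_nhds_subcover U
    fun x _ => (hUo x).mem_nhds (hUx x (mem_singleton x))
  set T : Finset (Set (Euc d)) := insert Ωᶜ (t.image U) with hT
  have hTm : ∀ S ∈ T, MeasurableSet S ∧ ρ (S ∩ Dᶜ) ≤ ε := by
    intro S hS
    rcases Finset.mem_insert.1 hS with rfl | hS
    · exact ⟨hΩ.measurableSet.compl, (measure_mono inter_subset_left).trans (by simp [hρΩ])⟩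
    · obtain ⟨x, -, rfl⟩ := Finset.mem_image.1 hS
      refine ⟨(hUo x).measurableSet, ?_⟩
      rw [← Measure.restrict_apply (hUo x).measurableSet]
      exact (hUm x).le
  have hcov : ∀ x, ∃ S ∈ T, x ∈ S := by
    intro x
    by_cases hx : x ∈ Ω
    · obtain ⟨y, hy, hxy⟩ := mem_iUnion₂.1 (ht hx)
      exact ⟨U y, Finset.mem_insert_of_mem (Finset.mem_image_of_mem U hy), hxy⟩
    · exact ⟨Ωᶜ, Finset.mem_insert_self _ _, hx⟩
  set f : Fin T.card → Set (Euc d) := fun j => (T.equivFin.symm j).1 with hf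
  have hfT : ∀ j, f j ∈ T := fun j => (T.equivFin.symm j).2
  refine ⟨T.card, disjointed f, fun j => ?_, disjoint_disjointed f, ?_, fun j => ?_⟩
  · exact disjointedRec (p := MeasurableSet) (fun _ i h => h.diff (hTm _ (hfT i)).1)
      (hTm _ (hfT j)).1
  · rw [iUnion_disjointed]
    refine eq_univ_of_forall fun x => ?_
    obtain ⟨S, hS, hxS⟩ := hcov x
    exact mem_iUnion.2 ⟨T.equivFin ⟨S, hS⟩, by simpa [hf] using hxS⟩
  · exact (measure_mono (inter_subset_inter_left _ (disjointed_subset f j))).trans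
      (hTm _ (hfT j)).2

/-- A finite bound forces the vector measure to vanish off the atoms of `ρ`: on a set cut into
pieces of mass at most `ε`, the total vector mass is at most a multiple of `ε^(1-α)`. -/
lemma TestBound.vanish {d : ℕ} {α : ℝ} (hα' : α < 1)
    {ρ : Measure (Euc d)} [IsFiniteMeasure ρ]
    {q : Fin d → SignedMeasure (Euc d)} {L : ℝ≥0∞} (hL : L ≠ ⊤) (H : TestBound α ρ q L)
    {Ω : Set (Euc d)} (hΩ : IsCompact Ω) (hρΩ : ρ Ωᶜ = 0)
    {D : Set (Euc d)} (hat : ∀ x ∉ D, ρ {x} = 0)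
    {S : Set (Euc d)} (hS : MeasurableSet S) (hSD : Disjoint S D) : vecVal q S = 0 := by
  have key : ∀ ε : ℝ, 0 < ε → ‖vecVal q S‖ ≤ L.toReal * (2 * ε) ^ (1 - α) := by
    intro ε hε
    obtain ⟨n, B, hBm, hBd, hBu, hBε⟩ := exists_partition_small ρ hΩ hρΩ hat
      (ENNReal.ofReal_pos.2 hε)
    have hd : Pairwise (Function.onFun Disjoint fun j => S ∩ B j) :=
      fun j k hjk => (hBd hjk).mono inter_subset_right inter_subset_right
    have hm : ∀ j, MeasurableSet (S ∩ B j) := fun j => hS.inter (hBm j)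
    have hsum : vecVal q S = ∑ j, vecVal q (S ∩ B j) := by
      ext i
      have h := VectorMeasure.of_disjoint_iUnion (v := q i) hm hd
      rw [← inter_iUnion, hBu, inter_univ, tsum_fintype] at h
      simp [vecVal, h]
    have hsmall : ∀ j, ρ.real (S ∩ B j) ≤ ε := fun j =>
      ENNReal.toReal_le_of_le_ofReal hε.le ((measure_mono
        (subset_inter inter_subset_right fun _ hx h => Set.disjoint_left.1 hSD hx.1 h)).trans
        (hBε j))
    have h1 := (ENNReal.ofReal_le_iff_le_toReal hL).1 (H.measurable _ hm hd hε)
    have h2ε : 0 < 2 * ε := by positivity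
    have h2 : ∀ j, ‖vecVal q (S ∩ B j)‖ ≤
        ‖vecVal q (S ∩ B j)‖ * (ρ.real (S ∩ B j) + ε) ^ (α - 1) * (2 * ε) ^ (1 - α) := by
      intro j
      have hpos : 0 < ρ.real (S ∩ B j) + ε :=
        add_pos_of_nonneg_of_pos measureReal_nonneg hε
      have h3 : (2 * ε) ^ (α - 1) ≤ (ρ.real (S ∩ B j) + ε) ^ (α - 1) :=
        Real.rpow_le_rpow_of_nonpos hpos (by linarith [hsmall j]) (by linarith)
      have h4 : (2 * ε) ^ (α - 1) * (2 * ε) ^ (1 - α) = 1 := by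
        rw [← Real.rpow_add h2ε]; simp
      calc ‖vecVal q (S ∩ B j)‖
          = ‖vecVal q (S ∩ B j)‖ * (2 * ε) ^ (α - 1) * (2 * ε) ^ (1 - α) := by
            rw [mul_assoc, h4, mul_one]
        _ ≤ _ := by gcongr
    calc ‖vecVal q S‖ ≤ ∑ j, ‖vecVal q (S ∩ B j)‖ := by rw [hsum]; exact norm_sum_le _ _
      _ ≤ ∑ j, ‖vecVal q (S ∩ B j)‖ * (ρ.real (S ∩ B j) + ε) ^ (α - 1) *
            (2 * ε) ^ (1 - α) := Finset.sum_le_sum fun j _ => h2 j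
      _ = (∑ j, ‖vecVal q (S ∩ B j)‖ * (ρ.real (S ∩ B j) + ε) ^ (α - 1)) *
            (2 * ε) ^ (1 - α) := by rw [Finset.sum_mul]
      _ ≤ _ := by gcongr
  have hlim : Tendsto (fun n : ℕ => L.toReal * (2 * (1 / ((n : ℝ) + 1))) ^ (1 - α)) atTop
      (nhds (L.toReal * (2 * 0) ^ (1 - α))) :=
    ((tendsto_one_div_add_atTop_nhds_zero_nat.const_mul 2).rpow_const
      (Or.inr (by linarith))).const_mul _
  rw [mul_zero, Real.zero_rpow (by linarith), mul_zero] at hlim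
  exact norm_le_zero_iff.1 (ge_of_tendsto' hlim fun n => key _ (by positivity))

/-- The test bound characterizes the energy: it already implies absolute continuity, atomicity
and the bound on the sum over atoms. -/
lemma TestBound.energy_le {d : ℕ} {α : ℝ} (hα : 0 < α) (hα' : α < 1)
    {ρ : Measure (Euc d)} [IsFiniteMeasure ρ]
    {q : Fin d → SignedMeasure (Euc d)} {L : ℝ≥0∞} (H : TestBound α ρ q L)
    {Ω : Set (Euc d)} (hΩ : IsCompact Ω) (hρΩ : ρ Ωᶜ = 0) : Fc α ρ q ≤ L := by
  by_cases hL : L = ⊤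
  · rw [hL]; exact le_top
  set D : Set (Euc d) := {x | 0 < ρ {x}} with hDdef
  have hDc : D.Countable := Measure.countable_meas_pos_of_disjoint_iUnion
    (fun x => measurableSet_singleton x) fun x y hxy => disjoint_singleton.2 hxy
  have hDm := hDc.measurableSet
  have hat : ∀ x ∉ D, ρ {x} = 0 := fun x hx => by simpa [hDdef] using hx
  have hvan : ∀ i, ∀ S : Set (Euc d), MeasurableSet S → Disjoint S D → q i S = 0 :=
    fun i S hS hSD => congrArg (fun w : Euc d => w i) (H.vanish hα' hL hΩ hρΩ hat hS hSD)
  have hac : ∀ i, q i ≪ᵥ ρ.toENNRealVectorMeasure := fun i =>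
    VectorMeasure.AbsolutelyContinuous.mk fun S hS h => by
      rw [Measure.toENNRealVectorMeasure_apply_measurable hS] at h
      refine hvan i S hS (Set.disjoint_left.2 fun x hx hxD => ?_)
      exact (lt_of_lt_of_le hxD (measure_mono (singleton_subset_iff.2 hx))).ne' h
  set v : Euc d → Euc d := fun x => WithLp.toLp 2 fun i => (q i).rnDeriv ρ x with hv
  have hvi : ∀ i, Integrable (fun x => v x i) ρ :=
    fun i => SignedMeasure.integrable_rnDeriv (q i) ρ
  have hvq : ∀ i, ∀ S : Set (Euc d), MeasurableSet S → q i S = ∫ x in S, v x i ∂ρ := by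
    intro i S hS
    conv_lhs => rw [← SignedMeasure.withDensityᵥ_rnDeriv_eq (q i) ρ (hac i)]
    exact withDensityᵥ_apply (hvi i) hS
  refine (iInf₂_le v ⟨hvi, hvq⟩).trans ?_
  set μ := ρ.withDensity fun x => ENNReal.ofReal (‖v x‖ ^ (1 / α)) with hμ
  have hμD : μ Dᶜ = 0 := by
    have hz : ∀ᵐ x ∂(ρ.restrict Dᶜ), ∀ i, v x i = 0 := by
      refine ae_all_iff.2 fun i => ?_
      refine Integrable.ae_eq_zero_of_forall_setIntegral_eq_zero (hvi i).restrict
        fun S hS _ => ?_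
      rw [Measure.restrict_restrict hS, ← hvq i _ (hS.inter hDm.compl)]
      exact hvan i _ (hS.inter hDm.compl)
        (disjoint_compl_left.mono_left inter_subset_right)
    rw [hμ, withDensity_apply _ hDm.compl, lintegral_congr_ae (g := fun _ => 0)]
    · simp
    · filter_upwards [hz] with x hx
      have hx0 : v x = 0 := by ext i; exact hx i
      simp [hx0, Real.zero_rpow (inv_ne_zero hα.ne')]
  unfold Ga
  rw [if_pos ⟨D, hDc, hμD⟩, ENNReal.tsum_eq_iSup_sum]
  refine iSup_le fun t => ?_
  have hpos : ∀ x : {x : Euc d // μ {x} ≠ 0}, 0 < ρ.real {x.1} := by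
    intro x
    refine ENNReal.toReal_pos (fun h => x.2 ?_) (measure_ne_top _ _)
    exact withDensity_absolutelyContinuous _ _ h
  have hval : ∀ x, ‖vecVal q {x}‖ = ‖v x‖ * ρ.real {x} := by
    intro x
    have : vecVal q {x} = ρ.real {x} • v x := by
      ext i
      simp only [vecVal, PiLp.smul_apply, hvq i _ (measurableSet_singleton x),
        integral_singleton]
    rw [this, norm_smul, Real.norm_eq_abs, abs_of_nonneg measureReal_nonneg, mul_comm]
  have hlim : Tendsto (fun n : ℕ => ENNReal.ofReal (∑ x : t, ‖vecVal q {x.1.1}‖ *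
      (ρ.real {x.1.1} + 1 / ((n : ℝ) + 1)) ^ (α - 1))) atTop
      (nhds (ENNReal.ofReal (∑ x : t, ‖vecVal q {x.1.1}‖ *
        (ρ.real {x.1.1} + 0) ^ (α - 1)))) := by
    refine ENNReal.tendsto_ofReal (tendsto_finsetSum _ fun x _ => ?_)
    refine Tendsto.const_mul _
      ((tendsto_one_div_add_atTop_nhds_zero_nat.const_add _).rpow_const (Or.inl ?_))
    rw [add_zero]
    exact (hpos x.1).ne'
  have hterm : ∑ x ∈ t, μ {x.1} ^ α = ENNReal.ofReal (∑ x : t, ‖vecVal q {x.1.1}‖ *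
        (ρ.real {x.1.1} + 0) ^ (α - 1)) := by
    rw [ENNReal.ofReal_sum_of_nonneg fun x _ => by positivity, ← Finset.sum_coe_sort]
    refine Finset.sum_congr rfl fun x _ => ?_
    rw [withDensity_singleton_rpow hα ρ v x.1.1, hval, add_zero, mul_assoc]
    congr 2
    conv_rhs => rw [← Real.rpow_one_add' measureReal_nonneg (by linarith)]
    congr 1; ring
  rw [hterm]
  refine le_of_tendsto' hlim fun n => H.measurable (fun x : t => ({x.1.1} : Set (Euc d)))
    (fun x => measurableSet_singleton _) (fun x y hxy => ?_) (by positivity)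
  exact disjoint_singleton.2 fun h => hxy (Subtype.ext (Subtype.ext h))

/-- for `Ω ⊂ ℝ^d` compact and `0 < α < 1`, the branched-transport integrand
`F(ρ,q) = G_α(|v|^{1/α}·ρ)` if `q = v·ρ` (and `+∞` otherwise) is lower semicontinuous with
respect to weak* convergence of the pairs of measures `(ρ,q)` on `Ω`. -/
theorem stmt_16 {d : ℕ} (hd : 0 < d) (α : ℝ) (hα : 0 < α) (hα' : α < 1)
    (Ω : Set (Euc d)) (hΩ : IsCompact Ω)
    (ρn : ℕ → Measure (Euc d)) (qn : ℕ → Fin d → SignedMeasure (Euc d))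
    (ρ : Measure (Euc d)) (q : Fin d → SignedMeasure (Euc d))
    (hρn : ∀ n, IsFiniteMeasure (ρn n) ∧ ρn n Ωᶜ = 0) (hρ : IsFiniteMeasure ρ ∧ ρ Ωᶜ = 0)
    (hqn : ∀ n i, (qn n i).toJordanDecomposition.posPart Ωᶜ = 0 ∧
      (qn n i).toJordanDecomposition.negPart Ωᶜ = 0)
    (hq : ∀ i, (q i).toJordanDecomposition.posPart Ωᶜ = 0 ∧
      (q i).toJordanDecomposition.negPart Ωᶜ = 0)
    (hwρ : ∀ f : Euc d → ℝ, Continuous f →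
      Tendsto (fun n => ∫ x, f x ∂(ρn n)) atTop (nhds (∫ x, f x ∂ρ)))
    (hwq : ∀ i : Fin d, ∀ f : Euc d → ℝ, Continuous f →
      Tendsto (fun n => sInt f (qn n i)) atTop (nhds (sInt f (q i)))) :
    Fc α ρ q ≤ liminf (fun n => Fc α (ρn n) (qn n)) atTop := by
  have := hρ.1
  exact (testBound_liminf hα hα' ρn qn ρ q (fun n => (hρn n).1) hwρ hwq).energy_le hα hα' hΩ hρ.2
end
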